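/- arXiv:1807.05348 — 9 statements merged into one kernel-verified Lean document; each statement's English description precedes it below -/
import Mathlib

section
/- Let A be an n×m integer matrix with columns A_1, …, A_m such that there is no nonzero x ∈ ℤ^m with x ≥ 0 and Ax = 0, and for y ∈ ℤⁿ let f_A(y) be the (finite) number of x ∈ ℤ^m with x ≥ 0 and Ax = y. Let z ∈ ℂⁿ have all entries nonzero and satisfy ∏_{l=1}^n |z_l|^{A_{lk}} > 1 for every k = 1, …, m. Then the family y ↦ f_A(y)·z^{-y}, indexed by y ∈ ℤⁿ, is absolutely summable, and ∑_{y ∈ ℤⁿ} f_A(y)·z^{-y} = ∏_{k=1}^m 1/(1 − z^{-A_k}). -/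
/-!
Expand each factor as a geometric series in `z^{-A_k}`, which has norm `< 1` by hypothesis.
The product of these absolutely convergent series is the absolutely convergent series of
`∏_k (z^{-A_k})^{x_k} = z^{-Ax}` over `x ∈ ℕ^m` (`multigeometric`). Grouping the terms by the value
`y = Ax` turns it into `∑_y f_A(y) z^{-y}`, since the summand is constant on each fibre and the
fibre over `y` has `f_A(y)` elements.
-/

/-- The multivariate geometric series converges absolutely on the open unit polydisc. -/
lemma multigeometric : ∀ (m : ℕ) (w : Fin m → ℂ), (∀ k, ‖w k‖ < 1) →
    Summable (fun x : Fin m → ℕ => ‖∏ k, w k ^ x k‖) ∧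
    ∑' x : Fin m → ℕ, ∏ k, w k ^ x k = ∏ k, (1 - w k)⁻¹ := by
  intro m
  induction m with
  | zero =>
    intro w _
    exact ⟨Summable.of_finite, by simp⟩
  | succ m ih =>
    intro w hw
    obtain ⟨hs, ht⟩ := ih (fun k => w k.succ) (fun k => hw _)
    have hg : Summable (fun j : ℕ => ‖w 0 ^ j‖) := by
      simpa [norm_pow] using summable_geometric_of_lt_one (norm_nonneg _) (hw 0)
    have key : ∀ p : ℕ × (Fin m → ℕ),
        ∏ k, w k ^ (Fin.consEquiv (fun _ => ℕ) p) k = w 0 ^ p.1 * ∏ k, w k.succ ^ p.2 k := by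
      intro p
      simp [Fin.prod_univ_succ, Fin.consEquiv]
    constructor
    · rw [← (Fin.consEquiv (fun _ : Fin (m + 1) => ℕ)).summable_iff]
      simpa only [Function.comp_def, key] using hg.mul_norm hs
    · rw [← (Fin.consEquiv (fun _ : Fin (m + 1) => ℕ)).tsum_eq]
      simp only [key]
      rw [← tsum_mul_tsum_of_summable_norm hg hs, ht, tsum_geometric_of_norm_lt_one (hw 0),
        Fin.prod_univ_succ]

/-- Natural vectors correspond to nonnegative integer vectors, compatibly with `x ↦ Ax`. -/
lemma card_fiber {n m : ℕ} (A : Matrix (Fin n) (Fin m) ℤ) (y : Fin n → ℤ) :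
    Nat.card {x : Fin m → ℤ // 0 ≤ x ∧ A.mulVec x = y} =
      Nat.card ((fun x : Fin m → ℕ => A.mulVec (fun k => (x k : ℤ))) ⁻¹' {y}) := by
  symm
  refine Nat.card_congr (Equiv.ofBijective
    (fun x => ⟨fun k => (x.1 k : ℤ), fun k => Int.natCast_nonneg _, x.2⟩) ⟨?_, ?_⟩)
  · rintro ⟨a, ha⟩ ⟨b, hb⟩ h
    ext k
    simpa using congrFun (congrArg Subtype.val h) k
  · rintro ⟨x, hx, hy⟩
    have hx' : (fun k => ((x k).toNat : ℤ)) = x := funext fun k => Int.toNat_of_nonneg (hx k)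
    exact ⟨⟨fun k => (x k).toNat, (congrArg A.mulVec hx').trans hy⟩, Subtype.ext hx'⟩

/-- `∏_k (z^{-A_k})^{x_k} = z^{-Ax}`. -/
lemma monomial_mulVec {n m : ℕ} (A : Matrix (Fin n) (Fin m) ℤ) (z : Fin n → ℂ)
    (hz : ∀ l, z l ≠ 0) (x : Fin m → ℕ) :
    ∏ k, (∏ l, z l ^ (-(A l k))) ^ x k
      = ∏ l, z l ^ (-(A.mulVec (fun k => (x k : ℤ)) l)) := by
  simp only [← Finset.prod_pow]
  rw [Finset.prod_comm]
  refine Finset.prod_congr rfl fun l _ => ?_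
  have hsum : ∀ (s : Finset (Fin m)) (e : Fin m → ℤ),
      z l ^ (∑ k ∈ s, e k) = ∏ k ∈ s, z l ^ e k := by
    intro s e
    induction s using Finset.induction_on with
    | empty => simp
    | insert a s ha ih => rw [Finset.sum_insert ha, Finset.prod_insert ha, zpow_add₀ (hz l), ih]
  rw [Matrix.mulVec, dotProduct, ← Finset.sum_neg_distrib, hsum]
  refine Finset.prod_congr rfl fun k _ => ?_
  rw [← zpow_natCast, ← zpow_mul, neg_mul]

/-- Brion–Vergne formula: the Z-transform of `y ↦ f_A(y)` at `z` with `Aᵀ ln |z| > 0`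
is absolutely summable, with sum `∏_k 1/(1 - z^{-A_k})`. -/
theorem stmt_3 (n m : ℕ) (hn : 1 ≤ n) (hm : 1 ≤ m)
    (A : Matrix (Fin n) (Fin m) ℤ)
    (hker : ¬ ∃ x : Fin m → ℤ, x ≠ 0 ∧ 0 ≤ x ∧ A.mulVec x = 0)
    (fA : (Fin n → ℤ) → ℕ)
    (hfA : ∀ y : Fin n → ℤ, fA y = Nat.card {x : Fin m → ℤ // 0 ≤ x ∧ A.mulVec x = y})
    (z : Fin n → ℂ) (hz : ∀ l, z l ≠ 0)
    (hzA : ∀ k : Fin m, 1 < ∏ l, ‖z l‖ ^ (A l k)) :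
    Summable (fun y : Fin n → ℤ => ‖(fA y : ℂ) * ∏ l, z l ^ (-(y l))‖) ∧
    ∑' y : Fin n → ℤ, (fA y : ℂ) * ∏ l, z l ^ (-(y l))
      = ∏ k, (1 - ∏ l, z l ^ (-(A l k)))⁻¹ := by
  have hw : ∀ k, ‖∏ l, z l ^ (-(A l k))‖ < 1 := by
    intro k
    simp only [norm_prod, norm_zpow, zpow_neg, Finset.prod_inv_distrib, norm_inv]
    exact inv_lt_one_of_one_lt₀ (hzA k)
  obtain ⟨hs, ht⟩ := multigeometric m _ hw
  simp only [monomial_mulVec A z hz] at hs ht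
  let g : (Fin m → ℕ) → (Fin n → ℤ) := fun x => A.mulVec (fun k => (x k : ℤ))
  -- `tsum_const` also covers an infinite fibre, where both sides would be zero.
  have fib : ∀ y, ∑' b : g ⁻¹' {y}, ∏ l, z l ^ (-(g b l)) = (fA y : ℂ) * ∏ l, z l ^ (-(y l)) := by
    intro y
    have h : ∀ b : g ⁻¹' {y}, ∏ l, z l ^ (-(g b l)) = ∏ l, z l ^ (-(y l)) := by
      rintro ⟨b, rfl⟩
      rfl
    rw [tsum_congr h, tsum_const, hfA, card_fiber, nsmul_eq_mul]
  have fibn : ∀ y, ∑' b : g ⁻¹' {y}, ‖∏ l, z l ^ (-(g b l))‖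
      = ‖(fA y : ℂ) * ∏ l, z l ^ (-(y l))‖ := by
    intro y
    have h : ∀ b : g ⁻¹' {y}, ‖∏ l, z l ^ (-(g b l))‖ = ‖∏ l, z l ^ (-(y l))‖ := by
      rintro ⟨b, rfl⟩
      rfl
    rw [tsum_congr h, tsum_const, hfA, card_fiber, nsmul_eq_mul, norm_mul, Complex.norm_natCast]
  constructor
  · have := (hs.hasSum.tsum_fiberwise g).summable
    exact this.congr fun y => fibn y
  · have := (hs.of_norm.hasSum.tsum_fiberwise g).tsum_eq
    rw [← ht, ← this]
    exact tsum_congr fun y => (fib y).symm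
end

section
/- Let A be an n×m integer matrix with columns A_1, …, A_m, let s ∈ ℝⁿ have all entries positive and satisfy ∏_{l=1}^n s_l^{A_{lk}} > 1 for every k = 1, …, m, and for y ∈ ℤⁿ let f_A(y) be the number of x ∈ ℤ^m with x ≥ 0 and Ax = y. Then f_A(y) = ∫_{[0,1]^n} (∏_{l=1}^n s_l^{y_l} exp(2πi t_l y_l)) · ∏_{k=1}^m (1 − ∏_{l=1}^n (s_l exp(2πi t_l))^{-A_{lk}})^{-1} dt, where the integral is the Lebesgue integral over the unit cube [0,1]^n in ℝⁿ (equality of complex numbers, the left side being the natural number f_A(y) regarded as a complex number). -/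
/-!
Put `z_l = s_l exp(2πi t_l)`. The hypothesis on `s` says that each `w_k = ∏_l z_l ^ (-A_{lk})`
has modulus `r_k < 1`, independent of `t`, so the product of the geometric series of the `w_k`
expands the integrand as `∑_{x ∈ ℕ^m} z ^ (y - A x)`, absolutely and uniformly in `t`. Integrating
term by term, the integral of the Laurent monomial `z ^ d` over the cube is `1` for `d = 0` and `0`
otherwise, so the integral is the sum over `x` of the indicator of `A x = y`. Convergence of this
series also shows that there are finitely many solutions, so its sum is their number.
-/

open MeasureTheory Real

lemma summable_norm_and_hasSum_mul {β : Type*} (f : ℕ → ℂ) (g : β → ℂ) (b : ℂ)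
    (hf : Summable fun j => ‖f j‖) (hg : Summable fun j => ‖g j‖) (hb : HasSum g b) :
    (Summable fun p : ℕ × β => ‖f p.1 * g p.2‖) ∧
      HasSum (fun p : ℕ × β => f p.1 * g p.2) ((∑' j, f j) * b) := by
  have h3 := hf.mul_norm hg
  exact ⟨h3, hf.of_norm.hasSum.mul hb h3.of_norm⟩

/-- Absolutely convergent series multiply out: the product of `m` of them is an absolutely
convergent series over multi-indices. -/
lemma summable_norm_and_hasSum_pi (m : ℕ) (f : Fin m → ℕ → ℂ)
    (hf : ∀ k, Summable fun j => ‖f k j‖) :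
    (Summable fun x : Fin m → ℕ => ‖∏ k, f k (x k)‖) ∧
      HasSum (fun x : Fin m → ℕ => ∏ k, f k (x k)) (∏ k, ∑' j, f k j) := by
  induction m with
  | zero =>
    refine ⟨Summable.of_finite, ?_⟩
    simp
  | succ m ih =>
    obtain ⟨h1, h2⟩ := ih (fun k => f k.succ) (fun k => hf _)
    obtain ⟨h3, h4⟩ := summable_norm_and_hasSum_mul (f 0) _ _ (hf 0) h1 h2
    rw [Fin.prod_univ_succ, ← (Fin.consEquiv fun _ : Fin (m + 1) => ℕ).summable_iff,
      ← (Fin.consEquiv fun _ : Fin (m + 1) => ℕ).hasSum_iff]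
    simp only [Function.comp_def, Fin.consEquiv_apply, Fin.prod_univ_succ, Fin.cons_zero,
      Fin.cons_succ]
    exact ⟨h3, h4⟩

/-- Orthogonality on a circle: the constant term is the only Laurent monomial with a nonzero mean. -/
lemma integral_circle_zpow (r : ℝ) (d : ℤ) :
    ∫ t in Set.Icc (0 : ℝ) 1, ((r : ℂ) * Complex.exp (2 * π * Complex.I * t)) ^ d
      = if d = 0 then 1 else 0 := by
  split_ifs with hd
  · simp [hd]
  · have hc : (2 * π * Complex.I * d : ℂ) ≠ 0 := by
      simp [hd, Complex.I_ne_zero, Real.pi_ne_zero]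
    have h (t : ℝ) : ((r : ℂ) * Complex.exp (2 * π * Complex.I * t)) ^ d
        = (r : ℂ) ^ d * Complex.exp (2 * π * Complex.I * d * t) := by
      rw [mul_zpow, ← Complex.exp_int_mul]
      ring_nf
    have h1 : Complex.exp (2 * π * Complex.I * d) = 1 :=
      Complex.exp_eq_one_iff.2 ⟨d, by ring⟩
    simp_rw [h]
    rw [integral_Icc_eq_integral_Ioc, ← intervalIntegral.integral_of_le zero_le_one,
      intervalIntegral.integral_const_mul, integral_exp_mul_complex hc]
    simp [h1]

/-- Orthogonality on a torus: only the constant Laurent monomial has a nonzero mean. -/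
lemma integral_torus_zpow (n : ℕ) (s : Fin n → ℝ) (d : Fin n → ℤ) :
    ∫ t in Set.univ.pi (fun _ : Fin n => Set.Icc (0 : ℝ) 1),
        ∏ l, ((s l : ℂ) * Complex.exp (2 * π * Complex.I * (t l))) ^ (d l)
      = if d = 0 then 1 else 0 := by
  rw [volume_pi, Measure.restrict_pi_pi, integral_fintype_prod_eq_prod
    (f := fun l (t : ℝ) => ((s l : ℂ) * Complex.exp (2 * π * Complex.I * t)) ^ (d l))]
  simp_rw [integral_circle_zpow]
  simp [Finset.prod_ite_zero, funext_iff]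

/-- If the indicator of `p` is summable, then `p` has finitely many solutions and the sum counts
them. -/
lemma eq_card_of_hasSum_ite {α : Type*} (p : α → Prop) [DecidablePred p] (a : ℂ)
    (h : HasSum (fun x => if p x then (1 : ℂ) else 0) a) : a = Nat.card {x // p x} := by
  have hfin : {x | p x}.Finite := by
    have := (Summable.tendsto_cofinite_zero ⟨a, h⟩).eventually_mem
      (Metric.ball_mem_nhds (0 : ℂ) one_pos)
    refine Set.Finite.subset this fun x hx => ?_
    have hx : p x := hx
    simp [hx]
  refine HasSum.unique h ?_
  have h2 : HasSum (fun x => if p x then (1 : ℂ) else 0)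
      (∑ x ∈ hfin.toFinset, if p x then (1 : ℂ) else 0) :=
    hasSum_sum_of_ne_finset_zero (by intro b hb; simpa using hb)
  convert h2 using 1
  rw [Finset.sum_congr rfl (g := fun _ => (1 : ℂ))
    (fun x hx => if_pos (by simpa using hx))]
  rw [Finset.sum_const, nsmul_one, ← Set.ncard_eq_toFinset_card _ hfin]
  rfl

/-- The nonnegative integer solutions of `A x = y`, as vectors of natural numbers. -/
lemma card_nonneg_solutions (n m : ℕ) (A : Matrix (Fin n) (Fin m) ℤ) (y : Fin n → ℤ) :
    Nat.card {x : Fin m → ℤ // 0 ≤ x ∧ A.mulVec x = y}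
      = Nat.card {x : Fin m → ℕ // A.mulVec (fun k => (x k : ℤ)) = y} := by
  refine (Nat.card_congr (Equiv.ofBijective
    (fun x => ⟨fun k => (x.1 k : ℤ), fun k => Int.natCast_nonneg _, x.2⟩) ⟨?_, ?_⟩)).symm
  · intro x x' h
    ext k
    have := congrFun (congrArg Subtype.val h) k
    exact Int.ofNat.inj this
  · rintro ⟨x, h0, hx⟩
    lift x to Fin m → ℕ using h0
    exact ⟨⟨x, hx⟩, rfl⟩

/-- Inverse Z-transform formula: `f_A(y)` is given by a contour integral of
`f̂_A(z) z^{y-1}`, parametrized as a Lebesgue integral over the unit cube. -/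
theorem stmt_4 (n m : ℕ) (hn : 1 ≤ n) (hm : 1 ≤ m)
    (A : Matrix (Fin n) (Fin m) ℤ)
    (s : Fin n → ℝ) (hs : ∀ l, 0 < s l)
    (hsA : ∀ k : Fin m, 1 < ∏ l, (s l) ^ (A l k))
    (fA : (Fin n → ℤ) → ℕ)
    (hfA : ∀ y : Fin n → ℤ, fA y = Nat.card {x : Fin m → ℤ // 0 ≤ x ∧ A.mulVec x = y}) :
    ∀ y : Fin n → ℤ,
      (fA y : ℂ) =
        ∫ t in Set.univ.pi (fun _ : Fin n => Set.Icc (0:ℝ) 1),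
          (∏ l, (s l : ℂ) ^ (y l) * Complex.exp (2 * π * Complex.I * (t l) * (y l)))
            * ∏ k, (1 - ∏ l, ((s l : ℂ) * Complex.exp (2 * π * Complex.I * (t l))) ^ (-(A l k)))⁻¹ := by
  intro y
  rw [hfA, card_nonneg_solutions]
  set z : (Fin n → ℝ) → Fin n → ℂ :=
    fun t l => (s l : ℂ) * Complex.exp (2 * π * Complex.I * (t l)) with hz
  have hz0 (t l) : z t l ≠ 0 :=
    mul_ne_zero (by exact_mod_cast (hs l).ne') (Complex.exp_ne_zero _)
  have hzn (t l) : ‖z t l‖ = s l := by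
    have : (2 * π * Complex.I * (t l) : ℂ) = ((2 * π * t l : ℝ) : ℂ) * Complex.I := by
      push_cast; ring
    simp only [hz, this, norm_mul, Complex.norm_exp_ofReal_mul_I, Complex.norm_real,
      Real.norm_eq_abs, abs_of_pos (hs l), mul_one]
  have hpre (t : Fin n → ℝ) :
      (∏ l, (s l : ℂ) ^ (y l) * Complex.exp (2 * π * Complex.I * (t l) * (y l)))
        = ∏ l, z t l ^ y l := by
    refine Finset.prod_congr rfl fun l _ => ?_
    rw [hz, mul_zpow, ← Complex.exp_int_mul, mul_comm (y l : ℂ)]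
  set w : (Fin n → ℝ) → Fin m → ℂ := fun t k => ∏ l, z t l ^ (-(A l k)) with hw
  set r : Fin m → ℝ := fun k => ∏ l, s l ^ (-(A l k)) with hr
  have hr0 (k) : 0 ≤ r k := Finset.prod_nonneg fun l _ => (zpow_pos (hs l) _).le
  have hr1 (k) : r k < 1 := by
    simp only [hr, zpow_neg, Finset.prod_inv_distrib]
    exact inv_lt_one_of_one_lt₀ (hsA k)
  have hwn (t k) : ‖w t k‖ = r k := by
    simp only [hw, hr, norm_prod, norm_zpow, hzn]
  have hgeo := fun t => summable_norm_and_hasSum_pi m (fun k j => w t k ^ j) (fun k => by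
    simpa only [norm_pow, hwn] using summable_geometric_of_lt_one (hr0 k) (hr1 k))
  -- the expansion of the integrand, with terms gathered into Laurent monomials in `z`
  have hF (t : Fin n → ℝ) (x : Fin m → ℕ) : (∏ l, z t l ^ y l) * ∏ k, w t k ^ x k
      = ∏ l, z t l ^ ((y - A.mulVec fun k => (x k : ℤ)) l) := by
    simp only [hw, ← Finset.prod_pow]
    rw [Finset.prod_comm, ← Finset.prod_mul_distrib]
    refine Finset.prod_congr rfl fun l _ => ?_
    rw [Pi.sub_apply, sub_eq_add_neg, zpow_add₀ (hz0 t l), Matrix.mulVec, dotProduct,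
      ← Finset.sum_neg_distrib]
    congr 1
    have (u : Finset (Fin m)) : ∏ k ∈ u, (z t l ^ (-A l k)) ^ x k
        = z t l ^ (∑ k ∈ u, -(A l k * (x k : ℤ))) := by
      induction u using Finset.induction_on with
      | empty => simp
      | insert a u ha ih =>
        rw [Finset.prod_insert ha, Finset.sum_insert ha, zpow_add₀ (hz0 t l), ih, ← zpow_natCast,
          ← zpow_mul, neg_mul]
    exact this _
  set F : (Fin m → ℕ) → (Fin n → ℝ) → ℂ :=
    fun x t => ∏ l, z t l ^ ((y - A.mulVec fun k => (x k : ℤ)) l) with hFdef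
  have hFn (x t) : ‖F x t‖ = (∏ l, s l ^ y l) * ∏ k, r k ^ x k := by
    simp only [hFdef, ← hF, norm_mul, norm_prod, norm_zpow, norm_pow, hzn, hwn]
  have hFint (x) : IntegrableOn (F x) (Set.univ.pi fun _ : Fin n => Set.Icc (0 : ℝ) 1) := by
    refine ContinuousOn.integrableOn_compact (isCompact_univ_pi fun _ => isCompact_Icc) ?_
    refine Continuous.continuousOn (continuous_finsetProd _ fun l _ => ?_)
    refine Continuous.zpow₀ (by simp only [hz]; fun_prop) _ fun t => Or.inl (hz0 t l)
  have hvol : volume.real (Set.univ.pi fun _ : Fin n => Set.Icc (0 : ℝ) 1) = 1 := by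
    rw [Measure.real, volume_pi_pi]
    simp
  have hsum : Summable fun x => ∫ t in Set.univ.pi (fun _ : Fin n => Set.Icc (0 : ℝ) 1),
      ‖F x t‖ := by
    simp only [hFn, setIntegral_const, hvol, one_smul]
    refine Summable.mul_left _ ?_
    simpa only [norm_prod, norm_pow, hwn] using (hgeo 0).1
  have hmain := hasSum_integral_of_summable_integral_norm hFint hsum
  have hterm (x) : ∫ t in Set.univ.pi (fun _ : Fin n => Set.Icc (0 : ℝ) 1), F x t
      = if A.mulVec (fun k => (x k : ℤ)) = y then 1 else 0 := by
    simp only [hFdef, hz, integral_torus_zpow, sub_eq_zero, eq_comm (a := y)]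
  simp only [hterm] at hmain
  rw [← eq_card_of_hasSum_ite _ _ hmain]
  refine integral_congr_ae (Filter.Eventually.of_forall fun t => ?_)
  simp only [hpre]
  have := ((hgeo t).2.mul_left (∏ l, z t l ^ y l)).tsum_eq
  simp only [hF] at this
  simp only [hFdef, this]
  congr 1
  refine Finset.prod_congr rfl fun k _ => ?_
  exact tsum_geometric_of_norm_lt_one (by rw [hwn]; exact hr1 k)
end

section
/- Let A be an n×m matrix with nonnegative integer entries such that every column A_k of A has at least one nonzero entry, let y ∈ (ℤ_{≥0})ⁿ, let N := ‖y‖_∞ + 1, and let r ∈ ℝ with r > 1. Then the family u ↦ r^{-N·(𝟙ᵀu)} · #{x ∈ (ℤ_{≥0})^m : Ax = y + Nu}, indexed by u ∈ (ℤ_{≥0})ⁿ, is summable, and (1/Nⁿ) ∑_{j ∈ {0,1,…,N−1}ⁿ} [∏_{k=1}^m (1 − (r·ω_N(j))^{-A_k})^{-1}] · r^{𝟙ᵀy} · ω_N(jᵀy) = ∑_{u ∈ (ℤ_{≥0})ⁿ} r^{-N·(𝟙ᵀu)} · #{x ∈ (ℤ_{≥0})^m : Ax = y + Nu}, as complex numbers.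 -/
open Real

/-!
Write `ζ = exp(2πi/N)` and `z_l = r ζ^{j_l}`. Since `r > 1` and every column of `A` is nonzero, each
`z^{-A_k}` has norm `< 1`, so the integrand is a product of geometric series and expands absolutely
into `∑_x z^{-Ax}` (`hasSum_prod_geometric`). For fixed `x`, the average over `j` of
`z^{-Ax} r^{𝟙ᵀy} ζ^{jᵀy}` factors over the coordinates, and by orthogonality of roots of unity
(`sum_root_pow`) it is `r^{𝟙ᵀ(y - Ax)}` if `Ax ≡ y (mod N)` and `0` otherwise. Because `0 ≤ y_l < N`,
the congruence says exactly that `Ax = y + Nu` for a unique `u ≥ 0`, so the surviving terms are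
indexed by the pairs `(u, x)` with `Ax = y + Nu`; summing over `x` first gives the right-hand side.
-/

/-- The multivariate geometric series: a product of geometric series, multiplied out. -/
lemma hasSum_prod_geometric {m : ℕ} (a : Fin m → ℂ) (ha : ∀ k, ‖a k‖ < 1) :
    HasSum (fun x : Fin m → ℕ => ∏ k, a k ^ x k) (∏ k, (1 - a k)⁻¹) ∧
      Summable (fun x : Fin m → ℕ => ‖∏ k, a k ^ x k‖) := by
  induction m with
  | zero =>
    refine ⟨?_, Summable.of_finite⟩
    simp [hasSum_unique]
  | succ m ih =>
    obtain ⟨h1, h2⟩ := ih (fun k => a k.succ) (fun k => ha k.succ)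
    have g1 := hasSum_geometric_of_norm_lt_one (ha 0)
    have g2 : Summable (fun i : ℕ => ‖a 0 ^ i‖) := by
      simp [ha 0]
    have s := summable_mul_of_summable_norm g2 h2
    have hs := g2.mul_norm h2
    have h := g1.mul h1 s
    rw [← (Fin.consEquiv (fun _ : Fin (m + 1) => ℕ)).hasSum_iff,
      ← (Fin.consEquiv (fun _ : Fin (m + 1) => ℕ)).summable_iff]
    have e1 : (fun x : Fin (m + 1) → ℕ => ∏ k, a k ^ x k) ∘ Fin.consEquiv (fun _ => ℕ) =
        fun p => a 0 ^ p.1 * ∏ k : Fin m, a k.succ ^ p.2 k := by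
      funext p
      simp [Fin.consEquiv, Fin.prod_univ_succ]
    have e2 : (fun x : Fin (m + 1) → ℕ => ‖∏ k, a k ^ x k‖) ∘ Fin.consEquiv (fun _ => ℕ) =
        fun p => ‖a 0 ^ p.1 * ∏ k : Fin m, a k.succ ^ p.2 k‖ :=
      congrArg (fun f => norm ∘ f) e1
    rw [e1, e2, Fin.prod_univ_succ]
    exact ⟨h, hs⟩

/-- Orthogonality of the characters of `ℤ/N`. -/
lemma sum_root_pow {N : ℕ} {ζ : ℂ} (hζ : IsPrimitiveRoot ζ N) (y b : ℕ) (hy : y < N) :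
    ∑ i : Fin N, (ζ ^ y * (ζ ^ b)⁻¹) ^ (i : ℕ) = if b % N = y then (N : ℂ) else 0 := by
  have hζ0 : ζ ≠ 0 := hζ.ne_zero (by omega)
  rw [Fin.sum_univ_eq_sum_range (fun i => (ζ ^ y * (ζ ^ b)⁻¹) ^ i)]
  have key : ζ ^ y * (ζ ^ b)⁻¹ = 1 ↔ b % N = y := by
    rw [mul_inv_eq_one₀ (pow_ne_zero _ hζ0)]
    rw [(hζ.isOfFinOrder (by omega)).pow_eq_pow_iff_modEq, ← hζ.eq_orderOf, Nat.ModEq,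
      Nat.mod_eq_of_lt hy, eq_comm]
  split_ifs with h
  · rw [key.2 h]; simp
  · have hne : ζ ^ y * (ζ ^ b)⁻¹ ≠ 1 := fun h' => h (key.1 h')
    rw [geom_sum_eq hne, mul_pow, inv_pow, ← pow_mul, ← pow_mul, mul_comm y, mul_comm b, pow_mul,
      pow_mul, hζ.pow_eq_one]
    simp

/-- The contribution of a single `x` to the trapezoidal sum at the node `j`, with the product over
columns rearranged into a product over coordinates. -/
lemma term_eq {n m : ℕ} (A : Matrix (Fin n) (Fin m) ℕ) (y : Fin n → ℕ) (x : Fin m → ℕ)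
    (j : Fin n → ℕ) (r ζ : ℂ) :
    (∏ k, (∏ l, (r * ζ ^ j l) ^ (-(A l k : ℤ))) ^ x k) * r ^ (∑ l, y l) * ζ ^ (∑ l, j l * y l) =
      ∏ l, (r ^ y l * (r ^ A.mulVec x l)⁻¹) * (ζ ^ y l * (ζ ^ A.mulVec x l)⁻¹) ^ j l := by
  have h : (∏ k, (∏ l, (r * ζ ^ j l) ^ (-(A l k : ℤ))) ^ x k) =
      ∏ l, ((r * ζ ^ j l) ^ A.mulVec x l)⁻¹ := by
    simp_rw [← Finset.prod_pow]
    rw [Finset.prod_comm]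
    refine Finset.prod_congr rfl fun l _ => ?_
    rw [Matrix.mulVec, dotProduct, ← Finset.prod_pow_eq_pow_sum, ← Finset.prod_inv_distrib]
    refine Finset.prod_congr rfl fun k _ => ?_
    rw [zpow_neg, zpow_natCast, inv_pow, pow_mul]
  rw [h, ← Finset.prod_pow_eq_pow_sum, ← Finset.prod_pow_eq_pow_sum, ← Finset.prod_mul_distrib,
    ← Finset.prod_mul_distrib]
  refine Finset.prod_congr rfl fun l _ => ?_
  rw [mul_pow, mul_pow, inv_pow, mul_inv, ← pow_mul, ← pow_mul, ← pow_mul, mul_comm (j l) (y l),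
    mul_comm (j l) (A.mulVec x l)]
  ring

/-- The trapezoidal-rule approximation `I_{N,r}[f̂_A](y)` with `N = ‖y‖_∞ + 1` equals
`∑_{u ≥ 0} r^{-N·𝟙ᵀu} · #{x ≥ 0 : Ax = y + Nu}`. -/
theorem stmt_5 (n m : ℕ) (hn : 1 ≤ n) (hm : 1 ≤ m)
    (A : Matrix (Fin n) (Fin m) ℕ) (hA : ∀ k : Fin m, ∃ l : Fin n, A l k ≠ 0)
    (y : Fin n → ℕ) (N : ℕ) (hN : N = (Finset.univ.sup y) + 1)
    (r : ℝ) (hr : 1 < r) :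
    Summable (fun u : Fin n → ℕ =>
        (r : ℂ) ^ (-((N : ℤ) * ∑ l, (u l : ℤ))) *
          (Nat.card {x : Fin m → ℕ // A.mulVec x = fun l => y l + N * u l} : ℂ)) ∧
    (1 / (N : ℂ) ^ n) *
      ∑ j : Fin n → Fin N,
        (∏ k, (1 - ∏ l, ((r : ℂ) * Complex.exp (2 * π * Complex.I * (j l : ℕ) / N))
              ^ (-(A l k : ℤ)))⁻¹)
          * (r : ℂ) ^ (∑ l, y l)
          * Complex.exp (2 * π * Complex.I * (∑ l, (j l : ℕ) * y l) / N)
      = ∑' u : Fin n → ℕ,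
          (r : ℂ) ^ (-((N : ℤ) * ∑ l, (u l : ℤ))) *
            (Nat.card {x : Fin m → ℕ // A.mulVec x = fun l => y l + N * u l} : ℂ) := by
  have hNpos : 0 < N := by omega
  have hyN : ∀ l, y l < N := fun l => by
    have := Finset.le_sup (f := y) (Finset.mem_univ l)
    omega
  have hr0 : (r : ℂ) ≠ 0 := by
    exact_mod_cast (by linarith : r ≠ 0)
  set ζ : ℂ := Complex.exp (2 * π * Complex.I / N) with hζdef
  have hζ : IsPrimitiveRoot ζ N := Complex.isPrimitiveRoot_exp N hNpos.ne'
  have hζn : ‖ζ‖ = 1 := hζ.norm'_eq_one hNpos.ne'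
  have hexp : ∀ a : ℕ, Complex.exp (2 * π * Complex.I * (a : ℂ) / N) = ζ ^ a := fun a => by
    rw [hζdef, ← Complex.exp_nat_mul]
    congr 1
    ring
  have ha : ∀ (j : Fin n → Fin N) (k : Fin m),
      ‖∏ l, ((r : ℂ) * ζ ^ (j l : ℕ)) ^ (-(A l k : ℤ))‖ < 1 := fun j k => by
    obtain ⟨l₀, hl₀⟩ := hA k
    have hnorm : ‖∏ l, ((r : ℂ) * ζ ^ (j l : ℕ)) ^ (-(A l k : ℤ))‖ = (r ^ ∑ l, A l k)⁻¹ := by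
      rw [norm_prod, ← Finset.prod_pow_eq_pow_sum, ← Finset.prod_inv_distrib]
      refine Finset.prod_congr rfl fun l _ => ?_
      rw [norm_zpow, norm_mul, norm_pow, hζn, one_pow, mul_one, Complex.norm_real,
        Real.norm_of_nonneg (by linarith), zpow_neg, zpow_natCast]
    rw [hnorm]
    refine inv_lt_one_of_one_lt₀ (one_lt_pow₀ hr fun h0 => hl₀ ?_)
    exact (Finset.sum_eq_zero_iff.1 h0) l₀ (Finset.mem_univ _)
  -- what remains of the `x`-th term after averaging over the nodes
  set F : (Fin m → ℕ) → ℂ := fun x =>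
    ∏ l, ((r : ℂ) ^ y l * ((r : ℂ) ^ A.mulVec x l)⁻¹) * (if A.mulVec x l % N = y l then 1 else 0)
    with hF
  have hsum : HasSum F ((1 / (N : ℂ) ^ n) *
      ∑ j : Fin n → Fin N,
        (∏ k, (1 - ∏ l, ((r : ℂ) * ζ ^ (j l : ℕ)) ^ (-(A l k : ℤ)))⁻¹)
          * (r : ℂ) ^ (∑ l, y l) * ζ ^ (∑ l, (j l : ℕ) * y l)) := by
    have h := (hasSum_sum (s := Finset.univ) fun (j : Fin n → Fin N) _ =>
      (((hasSum_prod_geometric _ (ha j)).1.mul_right ((r : ℂ) ^ (∑ l, y l))).mul_right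
        (ζ ^ (∑ l, (j l : ℕ) * y l)))).mul_left (1 / (N : ℂ) ^ n)
    refine h.congr_fun fun x => ?_
    simp_rw [term_eq A y x (fun l => ((_ : Fin n → Fin N) l : ℕ))]
    rw [← Fintype.piFinset_univ, ← Finset.prod_univ_sum (fun _ => Finset.univ)
      (fun l (i : Fin N) => ((r : ℂ) ^ y l * ((r : ℂ) ^ A.mulVec x l)⁻¹) *
        (ζ ^ y l * (ζ ^ A.mulVec x l)⁻¹) ^ (i : ℕ))]
    have hN0 : (N : ℂ) ≠ 0 := by exact_mod_cast hNpos.ne'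
    have hpow : 1 / (N : ℂ) ^ n = ∏ _l : Fin n, (N : ℂ)⁻¹ := by simp
    rw [hpow, ← Finset.prod_mul_distrib, hF]
    refine Finset.prod_congr rfl fun l _ => ?_
    rw [← Finset.mul_sum, sum_root_pow hζ _ _ (hyN l)]
    split_ifs
    · field_simp
    · simp
  -- the surviving `x` correspond to the pairs `(u, x)` with `Ax = y + Nu`
  let e : (Σ u : Fin n → ℕ, {x : Fin m → ℕ // A.mulVec x = fun l => y l + N * u l}) →
    (Fin m → ℕ) := fun p => p.2.1
  have he : Function.Injective e := by
    rintro ⟨u, x, hx⟩ ⟨v, x', hx'⟩ (rfl : x = x')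
    have huv : u = v := by
      funext l
      have h1 := congrFun (hx.symm.trans hx') l
      exact Nat.eq_of_mul_eq_mul_left hNpos (by simpa using h1)
    subst huv
    rfl
  have hout : ∀ x ∉ Set.range e, F x = 0 := fun x hx => by
    by_contra hne
    refine hx ⟨⟨fun l => A.mulVec x l / N, x, ?_⟩, rfl⟩
    funext l
    have hl := Finset.prod_ne_zero_iff.1 hne l (Finset.mem_univ l)
    have hmod : A.mulVec x l % N = y l := by
      by_contra hc
      simp [hc] at hl
    rw [← hmod]
    exact (Nat.mod_add_div _ _).symm
  have hFe : F ∘ e = fun p => (r : ℂ) ^ (-((N : ℤ) * ∑ l, (p.1 l : ℤ))) := by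
    funext ⟨u, x, hx⟩
    have hexpo : (r : ℂ) ^ (-((N : ℤ) * ∑ l, (u l : ℤ))) = ∏ l, ((r : ℂ) ^ (N * u l))⁻¹ := by
      rw [Finset.prod_inv_distrib, Finset.prod_pow_eq_pow_sum, ← Finset.mul_sum, zpow_neg,
        ← zpow_natCast]
      push_cast
      rfl
    simp only [Function.comp, e, hF]
    rw [hexpo]
    refine Finset.prod_congr rfl fun l _ => ?_
    rw [congrFun hx l]
    simp only [Nat.add_mul_mod_self_left, Nat.mod_eq_of_lt (hyN l), if_true, mul_one]
    rw [pow_add, mul_inv, ← mul_assoc, mul_inv_cancel₀ (pow_ne_zero _ hr0), one_mul]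
  have hsig := (he.hasSum_iff hout).2 hsum
  rw [hFe] at hsig
  have hfin := hsig.sigma fun u => (hsig.summable.sigma_factor u).hasSum
  -- each fibre sum is constant in `x`, hence a multiple of the number of `x` with `Ax = y + Nu`
  simp only [tsum_const, nsmul_eq_mul] at hfin
  simp_rw [hexp]
  simp_rw [mul_comm (Nat.card _ : ℂ)] at hfin
  exact ⟨hfin.summable, hfin.tsum_eq.symm⟩
end

section
/- Let A be an n×m matrix with nonnegative integer entries such that every column A_k of A has at least one nonzero entry, let y ∈ (ℤ_{≥0})ⁿ, let N := ‖y‖_∞ + 1, and for y ∈ ℤⁿ let f_A(y) be the number of x ∈ ℤ^m with x ≥ 0 and Ax = y. Then f_A(y) = (1/Nⁿ) ∑_{j ∈ {0,1,…,N−1}ⁿ} ∑_{h ∈ {0,1,…,N−1}^m, 𝟙ᵀ(Ah) = 𝟙ᵀy} ω_N(jᵀ(y − Ah)), as complex numbers (the left side being the natural number f_A(y) regarded as a complex number). -/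
/-!
Interchanging the two sums, the `j`-sum for a fixed `h` factors into a product over the coordinates `l`
of character sums over `ℤ/N`, so by orthogonality of characters (`sum_exp_eq_ite`, `sum_exp_pi`) it
equals `Nⁿ` if `Ah ≡ y` modulo `N` in every coordinate and `0` otherwise. Hence the right-hand side counts
the `h ∈ {0, …, N-1}ᵐ` with `Ah ≡ y (mod N)` and `𝟙ᵀAh = 𝟙ᵀy`. Since `0 ≤ y_l < N`, the congruence forces
`Ah ≥ y` coordinatewise, and equality of the coordinate sums then forces `Ah = y`
(`eq_of_dvd_of_sum_eq`). Conversely, as no column of `A` vanishes, each solution of `Ax = y` satisfies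
`x_k ≤ ‖y‖_∞ < N` (`lt_of_mulVec_eq`), so restricting `h` to the box loses no solution.
-/


open Real


/-- Orthogonality of the characters of `ℤ/N`: the sum is geometric with ratio `exp (2πi d / N)`, an
`N`-th root of unity that equals `1` exactly when `N ∣ d`. -/
lemma sum_exp_eq_ite (N : ℕ) (hN : 0 < N) (d : ℤ) :
    ∑ a : Fin N, Complex.exp (2 * π * Complex.I * ((a : ℕ) * d) / N)
      = if (N : ℤ) ∣ d then (N : ℂ) else 0 := by
  have hN0 : (N : ℂ) ≠ 0 := by exact_mod_cast hN.ne'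
  have hpow : ∀ a : ℕ, Complex.exp (2 * π * Complex.I * (a * d) / N)
      = Complex.exp (2 * π * Complex.I * d / N) ^ a := by
    intro a
    rw [← Complex.exp_nat_mul]
    congr 1
    ring
  have hz : Complex.exp (2 * π * Complex.I * d / N) = 1 ↔ (N : ℤ) ∣ d := by
    rw [Complex.exp_eq_one_iff]
    constructor
    · rintro ⟨k, hk⟩
      refine ⟨k, ?_⟩
      have h2 : (2 * π * Complex.I : ℂ) ≠ 0 := Complex.two_pi_I_ne_zero
      rw [div_eq_iff hN0] at hk
      have h3 : (2 * π * Complex.I : ℂ) * d = (2 * π * Complex.I) * (N * k) := by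
        rw [hk]; ring
      exact_mod_cast mul_left_cancel₀ h2 h3
    · rintro ⟨k, rfl⟩
      refine ⟨k, ?_⟩
      push_cast
      field_simp
  simp only [hpow]
  rw [Fin.sum_univ_eq_sum_range (fun a => Complex.exp (2 * π * Complex.I * d / N) ^ a) N]
  split_ifs with h
  · simp [hz.2 h]
  · have h1 : Complex.exp (2 * π * Complex.I * d / N) ≠ 1 := fun h' => h (hz.1 h')
    rw [geom_sum_eq h1, ← Complex.exp_nat_mul]
    have h4 : Complex.exp (N * (2 * π * Complex.I * d / N)) = 1 :=
      Complex.exp_eq_one_iff.2 ⟨d, by field_simp⟩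
    rw [h4, sub_self, zero_div]

/-- Orthogonality of the characters of `(ℤ/N)ⁿ`. -/
lemma sum_exp_pi (n N : ℕ) (hN : 0 < N) (d : Fin n → ℤ) :
    ∑ j : Fin n → Fin N,
      Complex.exp (2 * π * Complex.I * (∑ l, (((j l : ℕ) : ℂ) * (d l : ℂ))) / N)
      = if ∀ l, (N : ℤ) ∣ d l then (N : ℂ) ^ n else 0 := by
  have h1 : ∀ j : Fin n → Fin N,
      Complex.exp (2 * π * Complex.I * (∑ l, (((j l : ℕ) : ℂ) * (d l : ℂ))) / N)
      = ∏ l, Complex.exp (2 * π * Complex.I * ((j l : ℕ) * d l) / N) := by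
    intro j
    rw [← Complex.exp_sum, Finset.mul_sum, Finset.sum_div]
  simp only [h1]
  have h2 := Finset.prod_univ_sum (fun _ : Fin n => (Finset.univ : Finset (Fin N)))
    (fun l a => Complex.exp (2 * π * Complex.I * ((a : ℕ) * d l) / N))
  rw [Fintype.piFinset_univ] at h2
  rw [← h2]
  simp only [sum_exp_eq_ite N hN]
  split_ifs with h
  · simp [h]
  · push Not at h
    obtain ⟨l, hl⟩ := h
    exact Finset.prod_eq_zero (Finset.mem_univ l) (by simp [hl])

/-- A nonnegative vector congruent modulo `N` to a vector with entries below `N` dominates it, hence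
equals it if the coordinate sums agree. -/
lemma eq_of_dvd_of_sum_eq {n N : ℕ} {u y : Fin n → ℕ} (hy : ∀ l, y l < N)
    (hd : ∀ l, (N : ℤ) ∣ (y l : ℤ) - u l) (hs : ∑ l, u l = ∑ l, y l) : u = y := by
  have hle : ∀ l, y l ≤ u l := by
    intro l
    have h1 : u l ≡ y l [MOD N] := (Nat.modEq_iff_dvd).2 (hd l)
    calc y l = y l % N := (Nat.mod_eq_of_lt (hy l)).symm
      _ = u l % N := h1.symm
      _ ≤ u l := Nat.mod_le _ _
  have h := (Finset.sum_eq_sum_iff_of_le (s := Finset.univ) (fun l _ => hle l)).1 hs.symm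
  exact funext fun l => (h l (Finset.mem_univ l)).symm

lemma lt_of_mulVec_eq {n m N : ℕ} {A : Matrix (Fin n) (Fin m) ℕ}
    (hA : ∀ k : Fin m, ∃ l : Fin n, A l k ≠ 0) {y : Fin n → ℕ} (hy : ∀ l, y l < N)
    {x : Fin m → ℕ} (hx : A.mulVec x = y) (k : Fin m) : x k < N := by
  obtain ⟨l, hl⟩ := hA k
  calc x k ≤ A l k * x k := Nat.le_mul_of_pos_left _ (Nat.pos_of_ne_zero hl)
    _ ≤ ∑ k, A l k * x k :=
      Finset.single_le_sum (f := fun k => A l k * x k) (fun _ _ => Nat.zero_le _) (Finset.mem_univ k)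
    _ = y l := congrFun hx l
    _ < N := hy l

/-- The inclusion-exclusion formula: `f_A(y)` equals
`(1/Nⁿ) ∑_j ∑_{h : 𝟙ᵀAh = 𝟙ᵀy} ω_N(jᵀ(y - Ah))` with `N = ‖y‖_∞ + 1`. -/
theorem stmt_7 (n m : ℕ) (hn : 1 ≤ n) (hm : 1 ≤ m)
    (A : Matrix (Fin n) (Fin m) ℕ) (hA : ∀ k : Fin m, ∃ l : Fin n, A l k ≠ 0)
    (y : Fin n → ℕ) (N : ℕ) (hN : N = (Finset.univ.sup y) + 1)
    (fA : (Fin n → ℕ) → ℕ)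
    (hfA : ∀ y' : Fin n → ℕ, fA y' = Nat.card {x : Fin m → ℕ // A.mulVec x = y'}) :
    (fA y : ℂ) = (1 / (N : ℂ) ^ n) *
      ∑ j : Fin n → Fin N,
        ∑ h ∈ Finset.univ.filter
            (fun h : Fin m → Fin N => ∑ l, (∑ k, A l k * (h k : ℕ)) = ∑ l, y l),
          Complex.exp (2 * π * Complex.I *
            (∑ l, ((j l : ℕ) : ℤ) * ((y l : ℤ) - ∑ k, (A l k : ℤ) * ((h k : ℕ) : ℤ))) / N) := by
  have hy : ∀ l, y l < N := fun l => by
    have := Finset.le_sup (f := y) (Finset.mem_univ l)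
    omega
  have hN0 : 0 < N := by omega
  have hNC : (N : ℂ) ≠ 0 := by exact_mod_cast hN0.ne'
  have hcard : fA y = (Finset.univ.filter
      (fun h : Fin m → Fin N => A.mulVec (fun k => (h k : ℕ)) = y)).card := by
    rw [hfA, ← Fintype.card_subtype, ← Nat.card_eq_fintype_card]
    exact Nat.card_congr
      { toFun := fun x => ⟨fun k => ⟨x.1 k, lt_of_mulVec_eq hA hy x.2 k⟩, x.2⟩
        invFun := fun h => ⟨fun k => (h.1 k : ℕ), h.2⟩
        left_inv := fun _ => rfl
        right_inv := fun _ => rfl }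
  have key : ∀ h : Fin m → Fin N,
      ∑ j : Fin n → Fin N, Complex.exp (2 * π * Complex.I *
            (∑ l, ((j l : ℕ) : ℤ) * ((y l : ℤ) - ∑ k, (A l k : ℤ) * ((h k : ℕ) : ℤ))) / N)
      = if ∀ l, (N : ℤ) ∣ (y l : ℤ) - ((∑ k, A l k * (h k : ℕ) : ℕ) : ℤ)
          then (N : ℂ) ^ n else 0 := by
    intro h
    rw [← sum_exp_pi n N hN0]
    refine Finset.sum_congr rfl fun j _ => ?_
    push_cast
    rfl
  rw [Finset.sum_comm]
  simp only [key]
  rw [← Finset.sum_filter, Finset.filter_filter, Finset.sum_const, nsmul_eq_mul, hcard]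
  have hset : Finset.univ.filter (fun h : Fin m → Fin N => A.mulVec (fun k => (h k : ℕ)) = y)
      = Finset.univ.filter (fun h : Fin m → Fin N =>
        (∑ l, (∑ k, A l k * (h k : ℕ)) = ∑ l, y l) ∧
        ∀ l, (N : ℤ) ∣ (y l : ℤ) - ((∑ k, A l k * (h k : ℕ) : ℕ) : ℤ)) := by
    refine Finset.filter_congr fun h _ => ⟨fun hh => ?_, fun hh => ?_⟩
    · have hl : ∀ l, ∑ k, A l k * (h k : ℕ) = y l := fun l => congrFun hh l
      simp [hl]
    · exact eq_of_dvd_of_sum_eq hy hh.2 hh.1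
  rw [hset]
  field_simp
end

section
/- Let A be an n×m matrix with nonnegative integer entries such that every column of A has at least one nonzero entry, let y ∈ (ℤ_{≥0})ⁿ, let N := ‖y‖_∞ + 1, and for y ∈ ℤⁿ let f_A(y) be the number of x ∈ ℤ^m with x ≥ 0 and Ax = y. In the group algebra ℚ[ℤ/Nℤ], writing σ(k) for the basis element of k ∈ ℤ/Nℤ, define F := (1/Nⁿ) ∑_{j ∈ {0,1,…,N−1}ⁿ} ∑_{h ∈ {0,1,…,N−1}^m, 𝟙ᵀ(Ah) = 𝟙ᵀy} σ( jᵀ(y − Ah) mod N ). Then there exist rational numbers K_i, indexed by the divisors i of N with i < N, such that F = f_A(y)·σ(0) + ∑_{i | N, i < N} K_i · ( σ(0) + σ(i) + σ(2i) + ⋯ + σ(N − i) ). -/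
/-!
For a fixed `h`, the inner sum over `j` is the sum of `σ(φ j)` for the homomorphism
`φ : (ℤ/N)ⁿ → ℤ/N`, `j ↦ ∑ l, j l * d l`, where `d` is the residue of `y - Ah`. All fibres of `φ`
over its range have the same size, and the range is the subgroup generated by some divisor `i`
of `N`, so that the sum is a multiple of `σ(0) + σ(i) + ⋯ + σ(N - i)`, with `i < N` as soon as
`d ≠ 0`. If `d = 0`, the sum is `Nⁿ σ(0)`.

It remains to count the `h` with `Ah ≡ y (mod N)` and `𝟙ᵀAh = 𝟙ᵀy`. As `0 ≤ y l < N`, the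
congruence forces `y l ≤ (Ah) l` for each `l`, and then equality of the coordinate sums forces
`Ah = y`. Conversely every solution of `Ax = y` has entries at most `‖y‖_∞ < N`, because no
column of `A` vanishes. So there are exactly `f_A(y)` such `h`. The remaining terms are dealt with
by membership in the linear span of the sums attached to proper divisors.
-/

/-- The subgroup sum `σ(0) + σ(i) + ⋯ + σ(N - i)` (for `i ∣ N`) in `ℚ[ℤ/N]`. -/
noncomputable def subgroupSum (N i : ℕ) : AddMonoidAlgebra ℚ (ZMod N) :=
  ∑ t ∈ Finset.range (N / i), AddMonoidAlgebra.single (((t * i : ℕ) : ZMod N)) (1 : ℚ)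

/-- A nontrivial subgroup of `ℤ/N` consists of the multiples of a proper divisor of `N`. -/
lemma exists_sum_subgroup_eq (N : ℕ) [NeZero N] (H : AddSubgroup (ZMod N)) (hH : H ≠ ⊥)
    (s : Finset (ZMod N)) (hs : ∀ r, r ∈ s ↔ r ∈ H) :
    ∃ i ∈ N.divisors.filter (fun i => i < N),
      ∑ r ∈ s, AddMonoidAlgebra.single r (1 : ℚ) = subgroupSum N i := by
  have hN0 : 0 < N := Nat.pos_of_ne_zero (NeZero.ne N)
  -- The divisor is the nonnegative generator of the preimage of `H` in `ℤ`.
  obtain ⟨a, ha⟩ := Int.subgroup_cyclic (H.comap (Int.castAddHom (ZMod N)))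
  have key : ∀ x : ℕ, ((x : ℕ) : ZMod N) ∈ H ↔ a.natAbs ∣ x := by
    intro x
    have h1 : ((x : ℤ)) ∈ H.comap (Int.castAddHom (ZMod N)) ↔ a ∣ (x : ℤ) := by
      rw [ha, ← AddSubgroup.zmultiples_eq_closure, Int.mem_zmultiples_iff]
    rw [← Int.natAbs_dvd, Int.natCast_dvd_natCast] at h1
    simpa using h1
  set i := a.natAbs with hi
  have hiN : i ∣ N := (key N).1 (by simp)
  have hi0 : 0 < i := Nat.pos_of_dvd_of_pos hiN hN0
  have hlt : i < N := by
    refine lt_of_le_of_ne (Nat.le_of_dvd hN0 hiN) ?_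
    intro h
    apply hH
    rw [eq_bot_iff]
    intro r hr
    rw [← ZMod.natCast_zmod_val r, key, h] at hr
    have := Nat.eq_zero_of_dvd_of_lt hr (ZMod.val_lt r)
    simpa using this
  refine ⟨i, by simp [hiN, hlt, hN0.ne'], ?_⟩
  symm
  have hlt' : ∀ t < N / i, t * i < N := fun t ht => by
    calc t * i < N / i * i := Nat.mul_lt_mul_of_pos_right ht hi0
      _ = N := Nat.div_mul_cancel hiN
  unfold subgroupSum
  refine Finset.sum_bij (fun t _ => ((t * i : ℕ) : ZMod N)) ?_ ?_ ?_ ?_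
  · intro t _
    rw [hs, key]
    exact Dvd.intro_left t rfl
  · intro t ht t' ht' h
    have h2 := congrArg ZMod.val h
    rw [ZMod.val_cast_of_lt (hlt' t (Finset.mem_range.1 ht)),
      ZMod.val_cast_of_lt (hlt' t' (Finset.mem_range.1 ht'))] at h2
    exact Nat.eq_of_mul_eq_mul_right hi0 h2
  · intro r hr
    rw [hs, ← ZMod.natCast_zmod_val r, key] at hr
    refine ⟨r.val / i, ?_, ?_⟩
    · exact Finset.mem_range.2 (Nat.div_lt_div_of_lt_of_dvd hiN (ZMod.val_lt r))
    · rw [Nat.div_mul_cancel hr, ZMod.natCast_zmod_val]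
  · intros; rfl

/-- Since all fibres of `j ↦ ∑ l, j l * d l` over its range have the same cardinality, the sum
over `j` is a multiple of the sum over the range. -/
lemma sum_single_mem_span (N n : ℕ) [NeZero N] (d : Fin n → ZMod N) (hd : d ≠ 0) :
    ∑ j : Fin n → ZMod N, AddMonoidAlgebra.single (∑ l, j l * d l) (1 : ℚ) ∈
      Submodule.span ℚ
        (subgroupSum N '' ((N.divisors.filter (fun i => i < N) : Finset ℕ) : Set ℕ)) := by
  classical
  let φ : (Fin n → ZMod N) →+ ZMod N :=
    { toFun := fun j => ∑ l, j l * d l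
      map_zero' := by simp
      map_add' := fun a b => by simp [add_mul, Finset.sum_add_distrib] }
  have hφ : φ.range ≠ ⊥ := by
    intro h
    apply hd
    ext l
    have : φ (Pi.single l 1) ∈ φ.range := ⟨_, rfl⟩
    rw [h, AddSubgroup.mem_bot] at this
    simpa [φ, Pi.single_apply] using this
  have hmem : ∀ r, r ∈ Finset.univ.image φ ↔ r ∈ φ.range := by
    intro r; simp
  obtain ⟨i, hi, hsum⟩ := exists_sum_subgroup_eq N φ.range hφ _ hmem
  have : ∑ j : Fin n → ZMod N, AddMonoidAlgebra.single (∑ l, j l * d l) (1 : ℚ) =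
      (Finset.univ.filter (fun j => φ j = 0)).card • subgroupSum N i := by
    rw [← hsum, Finset.smul_sum]
    change ∑ j : Fin n → ZMod N, AddMonoidAlgebra.single (φ j) (1 : ℚ) = _
    rw [Finset.sum_comp (fun r => AddMonoidAlgebra.single r (1 : ℚ)) φ]
    refine Finset.sum_congr rfl fun r hr => ?_
    congr 1
    exact AddMonoidHom.card_fiber_eq_of_mem_range φ (by simpa using hr) ⟨0, map_zero φ⟩
  rw [this]
  exact Submodule.smul_of_tower_mem _ _ (Submodule.subset_span ⟨i, by simpa using hi, rfl⟩)

/-- The index set `{0, …, N-1}ⁿ` may be replaced by `(ℤ/N)ⁿ`. -/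
lemma sum_fin_eq_sum_zmod (N n : ℕ) [NeZero N] (d : Fin n → ℤ) :
    ∑ j : Fin n → Fin N, AddMonoidAlgebra.single
        (((∑ l, ((j l : ℕ) : ℤ) * d l : ℤ)) : ZMod N) (1 : ℚ) =
      ∑ j : Fin n → ZMod N, AddMonoidAlgebra.single (∑ l, j l * (d l : ZMod N)) (1 : ℚ) := by
  obtain ⟨M, rfl⟩ := Nat.exists_eq_succ_of_ne_zero (NeZero.ne N)
  -- `ZMod (M + 1)` unfolds to `Fin (M + 1)`.
  refine Finset.sum_congr rfl fun j _ => ?_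
  congr 1
  push_cast
  refine Finset.sum_congr rfl fun l _ => ?_
  congr 1
  exact ZMod.natCast_zmod_val (n := M + 1) (j l)

/-- Structure of `f̄_A(s) ∈ ℚ[ℤ/Nℤ]`: it equals `f_A(y)·σ(0)` plus a rational combination of
the sums `σ(0) + σ(i) + ⋯ + σ(N-i)` over proper divisors `i` of `N`. -/
theorem stmt_10 (n m : ℕ) (hn : 1 ≤ n) (hm : 1 ≤ m)
    (A : Matrix (Fin n) (Fin m) ℕ) (hA : ∀ k : Fin m, ∃ l : Fin n, A l k ≠ 0)
    (y : Fin n → ℕ) (N : ℕ) (hN : N = (Finset.univ.sup y) + 1)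
    (fA : (Fin n → ℕ) → ℕ)
    (hfA : ∀ y' : Fin n → ℕ, fA y' = Nat.card {x : Fin m → ℕ // A.mulVec x = y'})
    (F : AddMonoidAlgebra ℚ (ZMod N))
    (hF : F = (1 / (N : ℚ) ^ n) •
      ∑ j : Fin n → Fin N,
        ∑ h ∈ Finset.univ.filter
            (fun h : Fin m → Fin N => ∑ l, (∑ k, A l k * (h k : ℕ)) = ∑ l, y l),
          AddMonoidAlgebra.single
            (((∑ l, ((j l : ℕ) : ℤ) * ((y l : ℤ) - ∑ k, (A l k : ℤ) * ((h k : ℕ) : ℤ))) : ℤ) :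
              ZMod N) (1 : ℚ)) :
    ∃ K : ℕ → ℚ,
      F = (fA y : ℚ) • AddMonoidAlgebra.single (0 : ZMod N) (1 : ℚ) +
        ∑ i ∈ N.divisors.filter (fun i => i < N),
          K i • ∑ t ∈ Finset.range (N / i),
            AddMonoidAlgebra.single (((t * i : ℕ) : ZMod N)) (1 : ℚ) := by
  classical
  have hNpos : 0 < N := by omega
  have : NeZero N := ⟨hNpos.ne'⟩
  have hyN : ∀ l, y l < N := fun l => by
    have := Finset.le_sup (f := y) (Finset.mem_univ l)
    omega
  set W := Submodule.span ℚ
    (subgroupSum N '' ((N.divisors.filter (fun i => i < N) : Finset ℕ) : Set ℕ)) with hW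
  suffices hF' : F - (fA y : ℚ) • AddMonoidAlgebra.single (0 : ZMod N) (1 : ℚ) ∈ W by
    rw [hW, Submodule.mem_span_image_finset_iff_exists_fun] at hF'
    obtain ⟨K, hK⟩ := hF'
    refine ⟨fun i => if hi : i ∈ N.divisors.filter (fun i => i < N) then K ⟨i, hi⟩ else 0, ?_⟩
    rw [← sub_eq_iff_eq_add', ← hK, ← Finset.sum_coe_sort (N.divisors.filter (fun i => i < N))]
    refine Finset.sum_congr rfl fun i _ => ?_
    beta_reduce
    rw [dif_pos i.2]
    rfl
  set T := Finset.univ.filter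
    (fun h : Fin m → Fin N => ∑ l, (∑ k, A l k * (h k : ℕ)) = ∑ l, y l) with hT
  let d : (Fin m → Fin N) → Fin n → ℤ :=
    fun h l => (y l : ℤ) - ∑ k, (A l k : ℤ) * ((h k : ℕ) : ℤ)
  let G : (Fin m → Fin N) → AddMonoidAlgebra ℚ (ZMod N) := fun h =>
    ∑ j : Fin n → ZMod N, AddMonoidAlgebra.single (∑ l, j l * (d h l : ZMod N)) (1 : ℚ)
  have hFG : F = (1 / (N : ℚ) ^ n) • ∑ h ∈ T, G h := by
    rw [hF, Finset.sum_comm]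
    congr 1
    exact Finset.sum_congr rfl fun h _ => sum_fin_eq_sum_zmod N n (d h)
  have hzero : ∀ h ∈ T, ((fun l => (d h l : ZMod N)) = 0 ↔
      ∀ l, ∑ k, A l k * (h k : ℕ) = y l) := by
    intro h hh
    constructor
    · intro h0
      have hle : ∀ l ∈ Finset.univ, y l ≤ ∑ k, A l k * (h k : ℕ) := by
        intro l _
        have h1 : (d h l : ZMod N) = 0 := congrFun h0 l
        have h2 : ((y l : ℕ) : ZMod N) = ((∑ k, A l k * (h k : ℕ) : ℕ) : ZMod N) := by
          simp only [d] at h1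
          push_cast at h1 ⊢
          exact sub_eq_zero.1 h1
        rw [ZMod.natCast_eq_natCast_iff', Nat.mod_eq_of_lt (hyN l)] at h2
        rw [h2]
        exact Nat.mod_le _ _
      have hsum := (Finset.mem_filter.1 hh).2
      intro l
      exact ((Finset.sum_eq_sum_iff_of_le hle).1 hsum.symm l (Finset.mem_univ l)).symm
    · intro h0
      ext l
      have : d h l = 0 := by
        simp only [d]
        rw [← h0 l]
        push_cast
        ring
      simp [this]
  have hcard : fA y = (T.filter (fun h => (fun l => (d h l : ZMod N)) = 0)).card := by
    rw [hfA, ← Nat.card_eq_finsetCard]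
    -- A column of `A` with a nonzero entry in row `l` bounds `x k` by `y l < N`.
    have hlt : ∀ x : Fin m → ℕ, A.mulVec x = y → ∀ k, x k < N := by
      intro x hx k
      obtain ⟨l, hl⟩ := hA k
      refine lt_of_le_of_lt ?_ (hyN l)
      rw [← hx]
      calc x k ≤ A l k * x k := Nat.le_mul_of_pos_left _ (Nat.pos_of_ne_zero hl)
        _ ≤ ∑ k, A l k * x k :=
          Finset.single_le_sum (f := fun k => A l k * x k) (fun _ _ => Nat.zero_le _)
            (Finset.mem_univ k)
    refine Nat.card_congr
      { toFun := fun x => ⟨fun k => ⟨x.1 k, hlt x.1 x.2 k⟩, ?_⟩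
        invFun := fun h => ⟨fun k => (h.1 k : ℕ), ?_⟩
        left_inv := fun x => rfl
        right_inv := fun h => rfl }
    · have hx : ∀ l, ∑ k, A l k * x.1 k = y l := fun l => congrFun x.2 l
      have hxT : (fun k => (⟨x.1 k, hlt x.1 x.2 k⟩ : Fin N)) ∈ T :=
        Finset.mem_filter.2 ⟨Finset.mem_univ _, Finset.sum_congr rfl fun l _ => hx l⟩
      exact Finset.mem_filter.2 ⟨hxT, (hzero _ hxT).2 hx⟩
    · obtain ⟨hhT, h0⟩ := Finset.mem_filter.1 h.2
      exact funext ((hzero _ hhT).1 h0)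
  have hGzero : ∀ h ∈ T.filter (fun h => (fun l => (d h l : ZMod N)) = 0),
      G h = ((N : ℚ) ^ n) • AddMonoidAlgebra.single (0 : ZMod N) (1 : ℚ) := by
    intro h hh
    have h0 := (Finset.mem_filter.1 hh).2
    have h1 : ∀ l, (d h l : ZMod N) = 0 := fun l => congrFun h0 l
    simp only [G, h1, mul_zero, Finset.sum_const_zero, Finset.sum_const, Finset.card_univ,
      Fintype.card_fun, ZMod.card, Fintype.card_fin]
    rw [← Nat.cast_smul_eq_nsmul ℚ]
    push_cast
    rfl
  have hNn : (N : ℚ) ^ n ≠ 0 := pow_ne_zero _ (by exact_mod_cast hNpos.ne')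
  rw [hFG, ← Finset.sum_filter_add_sum_filter_not T (fun h => (fun l => (d h l : ZMod N)) = 0),
    Finset.sum_congr rfl hGzero, Finset.sum_const, ← hcard, smul_add,
    ← Nat.cast_smul_eq_nsmul ℚ, smul_comm (fA y : ℚ), smul_smul, one_div,
    inv_mul_cancel₀ hNn, one_smul, add_sub_cancel_left]
  refine W.smul_mem _ (W.sum_mem fun h hh => ?_)
  exact sum_single_mem_span N n _ (Finset.mem_filter.1 hh).2
end

section
/- Let ℋ = (V, ℰ) be a hypergraph with finite vertex set V and hyperedge set ℰ a finite set of nonempty subsets of V, and let n := |V|. Then the number of perfect matchings of ℋ equals the coefficient of t^{n} in the polynomial (1/2^{n}) ∑_{U ⊆ V} (−1)^{|U|} ∏_{F ∈ ℰ} ( 1 + (−1)^{|F ∩ U|} t^{|F|} ) ∈ ℚ[t], where the outer sum runs over all subsets U of V. -/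
/-!
Expand each product over the subfamilies `M ⊆ ℰ` and write `d_M(v)` for the number of members of
`M` containing `v`. The exponent of `t` contributed by `M` is `∑_{F ∈ M} |F| = ∑_v d_M(v)`
(`sum_card_eq_sum_deg`), and its sign is `∏_{F ∈ M} (-1)^{|F ∩ U|} = ∏_{v ∈ U} (-1)^{d_M(v)}`
(`prod_sign_eq`). Summing over `U` with the weight `(-1)^{|U|}` factors as
`∏_v (1 - (-1)^{d_M(v)})`, which is `2^n` if every degree is odd and `0` otherwise
(`sum_sign_eq`). Odd degrees are at least `1`, so if they add up to `n = |V|` they all equal `1`,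
which says exactly that `M` is a perfect matching (`odd_and_sum_iff`).
-/

open Polynomial

namespace HypergraphMatching

variable {V : Type} [DecidableEq V]

/-- The degree of the vertex `v` in the family `M`: the number of members of `M` containing `v`. -/
def deg (M : Finset (Finset V)) (v : V) : ℕ := (M.filter (fun F => v ∈ F)).card

lemma sum_card_inter_eq (M : Finset (Finset V)) (U : Finset V) :
    ∑ F ∈ M, (F ∩ U).card = ∑ v ∈ U, deg M v := by
  have h : ∀ F : Finset V, (F ∩ U).card = ∑ v ∈ U, if v ∈ F then 1 else 0 := by
    intro F
    rw [← Finset.card_filter, Finset.inter_comm, Finset.filter_mem_eq_inter]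
  simp only [h, deg, Finset.card_filter]
  exact Finset.sum_comm

lemma sum_card_eq_sum_deg [Fintype V] (M : Finset (Finset V)) :
    ∑ F ∈ M, F.card = ∑ v, deg M v := by
  simpa using sum_card_inter_eq M Finset.univ

lemma prod_sign_eq (M : Finset (Finset V)) (U : Finset V) :
    ∏ F ∈ M, (-1 : ℚ) ^ (F ∩ U).card = ∏ v ∈ U, (-1 : ℚ) ^ deg M v := by
  rw [Finset.prod_pow_eq_pow_sum, Finset.prod_pow_eq_pow_sum, sum_card_inter_eq]

lemma sum_sign_eq [Fintype V] (M : Finset (Finset V)) :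
    ∑ U : Finset V, (-1 : ℚ) ^ U.card * ∏ F ∈ M, (-1 : ℚ) ^ (F ∩ U).card
      = if ∀ v, Odd (deg M v) then 2 ^ Fintype.card V else 0 := by
  have h : ∀ U : Finset V, (-1 : ℚ) ^ U.card * ∏ F ∈ M, (-1 : ℚ) ^ (F ∩ U).card
      = ∏ v ∈ U, -(-1 : ℚ) ^ deg M v := by
    intro U
    rw [prod_sign_eq, ← Finset.prod_const, ← Finset.prod_mul_distrib]
    simp
  simp only [h]
  rw [← Finset.powerset_univ, ← Finset.prod_one_add]
  split_ifs with hodd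
  · rw [Finset.prod_congr rfl (g := fun _ => (2 : ℚ))]
    · simp
    · intro v _
      rw [(hodd v).neg_one_pow]
      norm_num
  · push Not at hodd
    obtain ⟨v, hv⟩ := hodd
    refine Finset.prod_eq_zero (Finset.mem_univ v) ?_
    rw [(Nat.not_odd_iff_even.mp hv).neg_one_pow]
    norm_num

lemma deg_eq_one_iff (M : Finset (Finset V)) (v : V) :
    deg M v = 1 ↔ ∃! F : Finset V, F ∈ M ∧ v ∈ F := by
  rw [deg, Finset.card_eq_one, Finset.singleton_iff_unique_mem]
  simp

lemma odd_and_sum_iff [Fintype V] (M : Finset (Finset V)) :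
    ((∀ v, Odd (deg M v)) ∧ Fintype.card V = ∑ F ∈ M, F.card)
      ↔ ∀ v : V, ∃! F : Finset V, F ∈ M ∧ v ∈ F := by
  simp only [← deg_eq_one_iff, sum_card_eq_sum_deg]
  constructor
  · rintro ⟨hodd, hsum⟩ v
    have hsum' : ∑ _v : V, 1 = ∑ v, deg M v := by simpa using hsum
    exact ((Finset.sum_eq_sum_iff_of_le fun v _ => (hodd v).pos).mp hsum' v
      (Finset.mem_univ v)).symm
  · intro h
    simp [h]

lemma coeff_prod (ℰ : Finset (Finset V)) (U : Finset V) (n : ℕ) :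
    (∏ F ∈ ℰ, (1 + C ((-1 : ℚ) ^ (F ∩ U).card) * X ^ F.card)).coeff n
      = ∑ M ∈ ℰ.powerset,
          if n = ∑ F ∈ M, F.card then ∏ F ∈ M, (-1 : ℚ) ^ (F ∩ U).card else 0 := by
  rw [Finset.prod_one_add, finsetSum_coeff]
  refine Finset.sum_congr rfl fun M _ => ?_
  rw [Finset.prod_mul_distrib, ← map_prod, Finset.prod_pow_eq_pow_sum M _ X, coeff_C_mul_X_pow]

end HypergraphMatching

open HypergraphMatching in
/-- The number of perfect matchings of a hypergraph `(V, ℰ)` equals the coefficient of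
`t^{|V|}` in `(1/2^{|V|}) ∑_{U ⊆ V} (-1)^{|U|} ∏_{F ∈ ℰ} (1 + (-1)^{|F ∩ U|} t^{|F|})`. -/
theorem stmt_12 (V : Type) [Fintype V] [DecidableEq V]
    (ℰ : Finset (Finset V)) (hℰ : ∀ F ∈ ℰ, F.Nonempty) :
    (Nat.card {M : Finset (Finset V) // M ⊆ ℰ ∧ ∀ v : V, ∃! F : Finset V, F ∈ M ∧ v ∈ F} : ℚ)
      = (Polynomial.C ((1 : ℚ) / 2 ^ (Fintype.card V)) *
          ∑ U : Finset V, Polynomial.C ((-1 : ℚ) ^ U.card) *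
            ∏ F ∈ ℰ, (1 + Polynomial.C ((-1 : ℚ) ^ (F ∩ U).card) * X ^ F.card)).coeff
          (Fintype.card V) := by
  classical
  rw [coeff_C_mul, finsetSum_coeff]
  simp only [coeff_C_mul, coeff_prod, Finset.mul_sum (s := ℰ.powerset)]
  rw [Finset.sum_comm]
  have key : ∀ M : Finset (Finset V),
      (∑ U : Finset V, (-1 : ℚ) ^ U.card *
        if Fintype.card V = ∑ F ∈ M, F.card then ∏ F ∈ M, (-1 : ℚ) ^ (F ∩ U).card else 0)
      = 2 ^ Fintype.card V *
        if ∀ v : V, ∃! F : Finset V, F ∈ M ∧ v ∈ F then 1 else 0 := by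
    intro M
    simp only [← odd_and_sum_iff]
    by_cases hn : Fintype.card V = ∑ F ∈ M, F.card
    · simp only [eq_true hn, if_true, sum_sign_eq, and_true, mul_ite, mul_one, mul_zero]
    · simp [hn]
  simp only [key]
  rw [← Finset.mul_sum, ← mul_assoc, one_div, inv_mul_cancel₀ (by positivity), one_mul,
    Finset.sum_boole, Nat.card_eq_fintype_card, Fintype.card_subtype]
  congr 2
  ext M
  simp
end

section
/- Let ℋ = (V, ℰ) be an ℓ-uniform hypergraph (every hyperedge has cardinality ℓ, ℓ ≥ 1) with finite vertex set V, n := |V|, and suppose ℓ divides n; write M := n/ℓ. For U ⊆ V let e(U) := #{F ∈ ℰ : |F ∩ U| is odd}. Then the number of perfect matchings of ℋ equals (1/2^{n}) ∑_{U ⊆ V} (−1)^{|U|} ∑_{i=0}^{M} (−1)^i · C(e(U), i) · C(|ℰ| − e(U), M − i), where C(a, b) denotes the binomial coefficient. -/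
/-!
Expand the inner sum as `∑ ∏_{F ∈ S} (-1)^{|F ∩ U|}` over the sets `S ⊆ ℰ` of `n/ℓ` hyperedges,
grouping the `S` by the number `i` of hyperedges meeting `U` in an odd set
(`sum_powersetCard_sign`). For a fixed `S`, let `d(v)` be the number of `F ∈ S` containing `v`.
Double counting incidences gives `(-1)^{|U|} ∏_{F ∈ S} (-1)^{|F ∩ U|} = ∏_{v ∈ U} -(-1)^{d(v)}`,
whose sum over all `U` is `∏_v (1 - (-1)^{d(v)})`: this is `2^n` if every `d(v)` is odd and `0`
otherwise (`sum_sign_eq_ite`). Since `|S| = n/ℓ`, the degrees sum to `n`, so all of them are odd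
exactly when all of them equal `1`, i.e. when `S` is a perfect matching (`matching_iff_odd`).
-/

/-- A set of `m` elements of `E` of which `i` lie in `A = E.filter p` is the union of an
`i`-subset of `A` and an `(m - i)`-subset of its complement in `E`. -/
lemma card_powersetCard_filter {α : Type*} [DecidableEq α] (E : Finset α) (p : α → Prop)
    [DecidablePred p] (m i : ℕ) (hi : i ≤ m) :
    ((E.powersetCard m).filter (fun S => (S.filter p).card = i)).card
      = (E.filter p).card.choose i * (E.card - (E.filter p).card).choose (m - i) := by
  have hc : E.card - (E.filter p).card = (E.filter (fun x => ¬ p x)).card := by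
    have := Finset.card_filter_add_card_filter_not (s := E) p
    omega
  rw [hc, ← Finset.card_powersetCard, ← Finset.card_powersetCard, ← Finset.card_product]
  refine Finset.card_nbij' (fun S => (S.filter p, S.filter (fun x => ¬ p x)))
    (fun T => T.1 ∪ T.2) ?_ ?_ ?_ ?_
  · intro S hS
    simp only [Finset.coe_filter, Set.mem_ofPred_eq, Finset.mem_powersetCard] at hS
    have := Finset.card_filter_add_card_filter_not (s := S) p
    simp only [Finset.coe_product, Set.mem_prod, Finset.mem_coe, Finset.mem_powersetCard]
    exact ⟨⟨Finset.filter_subset_filter _ hS.1.1, hS.2⟩,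
      Finset.filter_subset_filter _ hS.1.1, by omega⟩
  · rintro ⟨A, B⟩ hT
    simp only [Finset.coe_product, Set.mem_prod, Finset.mem_coe, Finset.mem_powersetCard] at hT
    obtain ⟨⟨hA, hA'⟩, hB, hB'⟩ := hT
    have hd : Disjoint A B :=
      Finset.disjoint_of_subset_left hA (Finset.disjoint_of_subset_right hB
        (Finset.disjoint_filter_filter_not E E p))
    have hf : (A ∪ B).filter p = A := by
      ext x
      have h1 := @hA x
      have h2 := @hB x
      simp only [Finset.mem_filter, Finset.mem_union] at *
      tauto
    simp only [Finset.coe_filter, Set.mem_ofPred_eq, Finset.mem_powersetCard, hf]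
    refine ⟨⟨Finset.union_subset (hA.trans (Finset.filter_subset _ _))
      (hB.trans (Finset.filter_subset _ _)), ?_⟩, hA'⟩
    rw [Finset.card_union_of_disjoint hd]
    omega
  · intro S _
    exact Finset.filter_union_filter_not_eq p S
  · rintro ⟨A, B⟩ hT
    simp only [Finset.coe_product, Set.mem_prod, Finset.mem_coe, Finset.mem_powersetCard] at hT
    obtain ⟨⟨hA, -⟩, hB, -⟩ := hT
    ext x <;>
    · have h1 := @hA x
      have h2 := @hB x
      simp only [Finset.mem_filter, Finset.mem_union] at *
      tauto

lemma sum_powersetCard_sign {V : Type*} [DecidableEq V] (E : Finset (Finset V))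
    (U : Finset V) (m : ℕ) :
    ∑ S ∈ E.powersetCard m, ∏ F ∈ S, (-1 : ℚ) ^ (F ∩ U).card
      = ∑ i ∈ Finset.range (m + 1), (-1 : ℚ) ^ i *
          ((E.filter (fun F => Odd (F ∩ U).card)).card.choose i) *
          ((E.card - (E.filter (fun F => Odd (F ∩ U).card)).card).choose (m - i)) := by
  have hsign : ∀ S : Finset (Finset V), ∏ F ∈ S, (-1 : ℚ) ^ (F ∩ U).card
      = (-1) ^ (S.filter (fun F => Odd (F ∩ U).card)).card := by
    intro S
    rw [← Finset.prod_const, Finset.prod_filter]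
    refine Finset.prod_congr rfl fun F _ => ?_
    split_ifs with h
    · exact h.neg_one_pow
    · exact (Nat.not_odd_iff_even.mp h).neg_one_pow
  simp_rw [hsign]
  rw [← Finset.sum_fiberwise_of_maps_to
    (g := fun S : Finset (Finset V) => (S.filter (fun F => Odd (F ∩ U).card)).card)
    (t := Finset.range (m + 1))]
  · refine Finset.sum_congr rfl fun i hi => ?_
    rw [Finset.sum_congr rfl (g := fun _ => (-1 : ℚ) ^ i), Finset.sum_const,
      card_powersetCard_filter _ _ _ _ (Nat.lt_succ_iff.mp (Finset.mem_range.mp hi))]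
    · rw [nsmul_eq_mul]
      push_cast
      ring
    · intro S hS
      rw [(Finset.mem_filter.mp hS).2]
  · intro S hS
    rw [Finset.mem_range, Nat.lt_succ_iff, ← (Finset.mem_powersetCard.mp hS).2]
    exact Finset.card_filter_le _ _

lemma sum_sign_eq_ite {V : Type*} [Fintype V] [DecidableEq V] (S : Finset (Finset V)) :
    ∑ U : Finset V, (-1 : ℚ) ^ U.card * ∏ F ∈ S, (-1 : ℚ) ^ (F ∩ U).card
      = if ∀ v, Odd (S.filter (fun F => v ∈ F)).card then 2 ^ Fintype.card V else 0 := by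
  have hterm : ∀ U : Finset V, (-1 : ℚ) ^ U.card * ∏ F ∈ S, (-1 : ℚ) ^ (F ∩ U).card
      = ∏ v ∈ U, (-1) * (-1 : ℚ) ^ (S.filter (fun F => v ∈ F)).card := by
    intro U
    rw [Finset.prod_mul_distrib, Finset.prod_const, Finset.prod_pow_eq_pow_sum,
      Finset.prod_pow_eq_pow_sum]
    congr 2
    -- incidences `v ∈ F` with `v ∈ U` and `F ∈ S`, counted by `F` and by `v`
    simp_rw [Finset.card_filter]
    rw [Finset.sum_comm]
    refine Finset.sum_congr rfl fun F _ => ?_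
    rw [← Finset.card_filter, Finset.filter_mem_eq_inter, Finset.inter_comm]
  simp_rw [hterm]
  rw [← Finset.powerset_univ, ← Finset.prod_one_add]
  split_ifs with h
  · rw [Finset.prod_congr rfl (g := fun _ => (2 : ℚ))]
    · simp
    · intro v _
      rw [(h v).neg_one_pow]
      norm_num
  · push Not at h
    obtain ⟨v, hv⟩ := h
    refine Finset.prod_eq_zero (Finset.mem_univ v) ?_
    rw [(Nat.not_odd_iff_even.mp (by simpa using hv)).neg_one_pow]
    norm_num

/-- Perfect matchings are the `n/ℓ`-sets of hyperedges with all degrees odd: odd degrees are at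
least `1`, and they sum to `n`. -/
lemma matching_iff_odd {V : Type*} [Fintype V] [DecidableEq V]
    (E : Finset (Finset V)) (l : ℕ) (hl : 1 ≤ l) (hunif : ∀ F ∈ E, F.card = l)
    (hdvd : l ∣ Fintype.card V) (S : Finset (Finset V)) :
    (S ⊆ E ∧ ∀ v : V, ∃! F : Finset V, F ∈ S ∧ v ∈ F) ↔
      S ∈ (E.powersetCard (Fintype.card V / l)).filter
        (fun S => ∀ v, Odd (S.filter (fun F => v ∈ F)).card) := by
  have huniq : ∀ v : V, (∃! F : Finset V, F ∈ S ∧ v ∈ F) ↔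
      (S.filter (fun F => v ∈ F)).card = 1 := by
    intro v
    rw [Finset.card_eq_one_iff_existsUnique]
    simp only [Finset.mem_filter]
  simp_rw [huniq]
  rw [Finset.mem_filter, Finset.mem_powersetCard, and_assoc]
  refine and_congr_right fun hS => ?_
  have hsum : ∑ v : V, (S.filter (fun F => v ∈ F)).card = S.card * l := by
    simp_rw [Finset.card_filter]
    rw [Finset.sum_comm, ← smul_eq_mul, ← Finset.sum_const]
    refine Finset.sum_congr rfl fun F hF => ?_
    rw [← hunif F (hS hF), ← Finset.card_filter]
    simp
  constructor
  · intro h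
    refine ⟨?_, fun v => by rw [h v]; exact odd_one⟩
    simp only [h, Finset.sum_const, Finset.card_univ, smul_eq_mul, mul_one] at hsum
    rw [hsum, Nat.mul_div_cancel _ hl]
  · rintro ⟨hc, hodd⟩ v
    rw [hc, Nat.div_mul_cancel hdvd] at hsum
    have hs : ∑ v : V, 1 = ∑ v : V, (S.filter (fun F => v ∈ F)).card := by
      rw [hsum]
      simp
    exact ((Finset.sum_eq_sum_iff_of_le fun v _ => (hodd v).pos).mp hs v
      (Finset.mem_univ v)).symm

/-- For an `ℓ`-uniform hypergraph on `n` vertices with `ℓ ∣ n`, the number of perfect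
matchings equals
`(1/2ⁿ) ∑_{U ⊆ V} (-1)^{|U|} ∑_{i=0}^{n/ℓ} (-1)^i C(e(U), i) C(|ℰ| - e(U), n/ℓ - i)`. -/
theorem stmt_13 (V : Type) [Fintype V] [DecidableEq V]
    (ℰ : Finset (Finset V)) (ℓ : ℕ) (hℓ : 1 ≤ ℓ)
    (hunif : ∀ F ∈ ℰ, F.card = ℓ)
    (hdvd : ℓ ∣ Fintype.card V) :
    (Nat.card {M : Finset (Finset V) // M ⊆ ℰ ∧ ∀ v : V, ∃! F : Finset V, F ∈ M ∧ v ∈ F} : ℚ)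
      = (1 / 2 ^ (Fintype.card V)) *
          ∑ U : Finset V, (-1 : ℚ) ^ U.card *
            ∑ i ∈ Finset.range (Fintype.card V / ℓ + 1),
              (-1 : ℚ) ^ i *
                ((ℰ.filter (fun F => Odd (F ∩ U).card)).card.choose i) *
                ((ℰ.card - (ℰ.filter (fun F => Odd (F ∩ U).card)).card).choose
                  (Fintype.card V / ℓ - i)) := by
  simp_rw [← sum_powersetCard_sign, Finset.mul_sum]
  rw [Finset.sum_comm]
  simp_rw [← Finset.mul_sum, sum_sign_eq_ite]
  rw [Nat.card_congr (Equiv.subtypeEquivRight (matching_iff_odd ℰ ℓ hℓ hunif hdvd)),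
    Nat.card_eq_fintype_card, Fintype.card_coe, ← Finset.sum_filter, Finset.sum_const,
    nsmul_eq_mul]
  field_simp
end

section
/- Let G = (V, E) be a finite simple graph with n := |V| vertices, n even. For U ⊆ V let δU := {e ∈ E : exactly one endpoint of e lies in U}. Then the number of perfect matchings of G equals (1/2^{n}) ∑_{U ⊆ V} (−1)^{|U|} ∑_{i=0}^{n/2} (−1)^i · C(|δU|, i) · C(|E ∖ δU|, n/2 − i), where C(a, b) denotes the binomial coefficient. -/
/-!
Write `n = |V|` and `m = n / 2`. The inner sum over `i` is the coefficient of `X ^ m` in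
`(1 - X) ^ |δU| * (1 + X) ^ |E \ δU|`, that is, the sum of `(-1) ^ |S ∩ δU|` over all `S ⊆ E` with
`|S| = m` (`sum_powersetCard_prod_sign`). An edge `e` lies in `δU` exactly when `|e ∩ U|` is odd, so
`(-1) ^ |S ∩ δU| = ∏ v ∈ U, (-1) ^ deg_S v` (`prod_sign_eq`). After exchanging the two sums, the
sum over `U` factors as `∏ v, (1 - (-1) ^ deg_S v)` (`sum_sign_eq`), which is `2 ^ n` if all degrees
in `S` are odd and `0` otherwise. Since the degrees in `S` add up to `2 * m = n`, they are all odd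
only if they all equal `1`, that is, if `S` is a perfect matching (`all_odd_iff`).
-/

/-- The number of edges of `S` that contain `v`. -/
def edgeDegree {V : Type} [DecidableEq V] (S : Finset (Finset V)) (v : V) : ℕ :=
  (S.filter (fun e => v ∈ e)).card

/-- The two sides are the coefficient of `X ^ m` in `∏ e ∈ E, (1 ± X)`, with the sign `-` exactly
on the elements satisfying `p`. -/
theorem sum_powersetCard_prod_sign {α : Type} [DecidableEq α] (E : Finset α) (p : α → Prop)
    [DecidablePred p] (m : ℕ) :
    ∑ S ∈ E.powersetCard m, ∏ e ∈ S, (if p e then (-1 : ℚ) else 1) =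
      ∑ i ∈ Finset.range (m + 1), (-1 : ℚ) ^ i * ((E.filter p).card.choose i) *
        ((E.card - (E.filter p).card).choose (m - i)) := by
  have key : ∏ e ∈ E, (1 + Polynomial.C (if p e then (-1 : ℚ) else 1) * Polynomial.X) =
      ((1 + Polynomial.X) ^ (E.filter p).card).comp
          (Polynomial.C (-1 : ℚ) * Polynomial.X) *
        (1 + Polynomial.X) ^ (E.card - (E.filter p).card) := by
    rw [← Finset.prod_filter_mul_prod_filter_not E p]
    congr 1
    · rw [Finset.prod_congr rfl (g := fun _ => 1 + Polynomial.C (-1 : ℚ) * Polynomial.X)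
        (fun e he => by rw [if_pos (Finset.mem_filter.1 he).2]), Finset.prod_const]
      simp
    · rw [Finset.prod_congr rfl (g := fun _ => 1 + (Polynomial.X : Polynomial ℚ))
        (fun e he => by rw [if_neg (Finset.mem_filter.1 he).2]; simp), Finset.prod_const]
      congr 1
      have := Finset.card_filter_add_card_filter_not (s := E) p
      omega
  have h := congrArg (fun q => Polynomial.coeff q m) key
  simp only [Finset.prod_one_add, Finset.prod_mul_distrib, Finset.prod_const,
    Polynomial.finsetSum_coeff, ← map_prod, Polynomial.coeff_C_mul_X_pow] at h
  rw [Polynomial.coeff_mul] at h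
  simp only [Polynomial.comp_C_mul_X_coeff, Polynomial.coeff_one_add_X_pow] at h
  rw [Finset.Nat.sum_antidiagonal_eq_sum_range_succ_mk] at h
  rw [Finset.powersetCard_eq_filter, Finset.sum_filter]
  refine Eq.trans (Finset.sum_congr rfl fun S _ => ?_) (h.trans (Finset.sum_congr rfl fun i _ => ?_))
  · simp only [eq_comm]
  · ring

theorem prod_sign_eq {V : Type} [DecidableEq V] (S : Finset (Finset V))
    (hS : ∀ e ∈ S, e.card = 2) (U : Finset V) :
    ∏ e ∈ S, (if (e ∩ U).card = 1 then (-1 : ℚ) else 1) =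
      ∏ v ∈ U, (-1 : ℚ) ^ edgeDegree S v := by
  have h1 : ∀ e ∈ S, (if (e ∩ U).card = 1 then (-1 : ℚ) else 1) =
      ∏ v ∈ U, if v ∈ e then (-1 : ℚ) else 1 := by
    intro e he
    rw [← Finset.prod_filter, Finset.prod_const, Finset.filter_mem_eq_inter, Finset.inter_comm U e]
    have h2 : (e ∩ U).card ≤ 2 := (hS e he) ▸ Finset.card_le_card Finset.inter_subset_left
    generalize (e ∩ U).card = k at h2 ⊢
    interval_cases k <;> norm_num
  rw [Finset.prod_congr rfl h1, Finset.prod_comm]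
  refine Finset.prod_congr rfl fun v _ => ?_
  rw [← Finset.prod_filter, Finset.prod_const, edgeDegree]

theorem sum_sign_eq {V : Type} [Fintype V] [DecidableEq V] (d : V → ℕ) :
    ∑ U : Finset V, (-1 : ℚ) ^ U.card * ∏ v ∈ U, (-1 : ℚ) ^ d v =
      if ∀ v, Odd (d v) then 2 ^ Fintype.card V else 0 := by
  have h : ∑ U : Finset V, (-1 : ℚ) ^ U.card * ∏ v ∈ U, (-1 : ℚ) ^ d v =
      ∏ v : V, (1 + (-1) * (-1 : ℚ) ^ d v) := by
    rw [Finset.prod_one_add, Finset.powerset_univ]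
    exact Finset.sum_congr rfl fun U _ => by rw [Finset.prod_mul_distrib, Finset.prod_const]
  rw [h]
  split_ifs with hd
  · rw [Finset.prod_congr rfl (g := fun _ => (2 : ℚ))
      (fun v _ => by rw [(hd v).neg_one_pow]; norm_num)]
    simp
  · push Not at hd
    obtain ⟨v, hv⟩ := hd
    refine Finset.prod_eq_zero (Finset.mem_univ v) ?_
    rw [(Nat.not_odd_iff_even.1 hv).neg_one_pow]
    norm_num

theorem sum_edgeDegree {V : Type} [Fintype V] [DecidableEq V] (S : Finset (Finset V))
    (hS : ∀ e ∈ S, e.card = 2) : ∑ v, edgeDegree S v = 2 * S.card := by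
  simp only [edgeDegree, Finset.card_filter]
  rw [Finset.sum_comm, Finset.sum_congr rfl (g := fun _ => 2) (fun e he => by simp [hS e he])]
  simp [mul_comm]

theorem edgeDegree_eq_one_iff {V : Type} [DecidableEq V] (S : Finset (Finset V)) (v : V) :
    edgeDegree S v = 1 ↔ ∃! e : Finset V, e ∈ S ∧ v ∈ e := by
  simp [edgeDegree, Finset.card_eq_one, Finset.eq_singleton_iff_unique_mem, ExistsUnique]

/-- Odd degrees are at least `1`, and `n` numbers that are at least `1` with sum `n` are all `1`. -/
theorem all_odd_iff {V : Type} [Fintype V] [DecidableEq V] (S : Finset (Finset V))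
    (hS : ∀ e ∈ S, e.card = 2) (heven : Even (Fintype.card V)) :
    (S.card = Fintype.card V / 2 ∧ ∀ v, Odd (edgeDegree S v)) ↔
      ∀ v, ∃! e : Finset V, e ∈ S ∧ v ∈ e := by
  simp only [← edgeDegree_eq_one_iff]
  have hsum := sum_edgeDegree S hS
  have hn := Nat.two_mul_div_two_of_even heven
  constructor
  · rintro ⟨hc, hodd⟩ v
    have h : ∑ v : V, 1 = ∑ v, edgeDegree S v := by
      rw [hsum, hc, hn]; simp
    exact ((Finset.sum_eq_sum_iff_of_le fun v _ => (hodd v).pos).1 h v (Finset.mem_univ v)).symm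
  · intro h
    refine ⟨?_, fun v => by rw [h v]; exact odd_one⟩
    simp only [h, Finset.sum_const, Finset.card_univ, smul_eq_mul, mul_one] at hsum
    omega

/-- For a finite simple graph on `n` vertices (`n` even), the number of perfect matchings
equals `(1/2ⁿ) ∑_{U ⊆ V} (-1)^{|U|} ∑_{i=0}^{n/2} (-1)^i C(|δU|, i) C(|E ∖ δU|, n/2 - i)`. -/
theorem stmt_14 (V : Type) [Fintype V] [DecidableEq V]
    (E : Finset (Finset V)) (hE : ∀ e ∈ E, e.card = 2)
    (heven : Even (Fintype.card V)) :
    (Nat.card {M : Finset (Finset V) // M ⊆ E ∧ ∀ v : V, ∃! e : Finset V, e ∈ M ∧ v ∈ e} : ℚ)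
      = (1 / 2 ^ (Fintype.card V)) *
          ∑ U : Finset V, (-1 : ℚ) ^ U.card *
            ∑ i ∈ Finset.range (Fintype.card V / 2 + 1),
              (-1 : ℚ) ^ i *
                ((E.filter (fun e => (e ∩ U).card = 1)).card.choose i) *
                ((E.card - (E.filter (fun e => (e ∩ U).card = 1)).card).choose
                  (Fintype.card V / 2 - i)) := by
  have hcard : Nat.card {M : Finset (Finset V) // M ⊆ E ∧ ∀ v : V, ∃! e, e ∈ M ∧ v ∈ e} =
      ((E.powersetCard (Fintype.card V / 2)).filter
        (fun S => ∀ v, Odd (edgeDegree S v))).card := by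
    refine Nat.subtype_card _ fun S => ?_
    rw [Finset.mem_filter, Finset.mem_powersetCard, and_assoc]
    exact and_congr_right fun hS => all_odd_iff S (fun e he => hE e (hS he)) heven
  simp only [← sum_powersetCard_prod_sign, Finset.mul_sum]
  rw [Finset.sum_comm]
  have hterm : ∀ S ∈ E.powersetCard (Fintype.card V / 2),
      ∑ U : Finset V, (-1 : ℚ) ^ U.card *
        ∏ e ∈ S, (if (e ∩ U).card = 1 then (-1 : ℚ) else 1) =
      if ∀ v, Odd (edgeDegree S v) then 2 ^ Fintype.card V else 0 := by
    intro S hS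
    rw [← sum_sign_eq]
    exact Finset.sum_congr rfl fun U _ => by
      rw [prod_sign_eq S fun e he => hE e ((Finset.mem_powersetCard.1 hS).1 he)]
  simp only [← Finset.mul_sum]
  rw [Finset.sum_congr rfl hterm, ← Finset.sum_filter, Finset.sum_const, hcard, nsmul_eq_mul]
  field_simp
end

section
/- Let A be an n×m matrix with nonnegative integer entries, N a positive integer, and y ∈ (ℤ_{≥0})ⁿ. Let S ⊆ {1,…,n} be a set of row indices such that every column of A has at most one nonzero entry in the rows indexed by S (S is a stable set of the hypergraph ℋ(A)). For α ∈ S let C_α := {k ∈ {1,…,m} : A_{αk} ≠ 0}, and let C_0 := {k : A_{αk} = 0 for all α ∈ S}; the sets C_0 and (C_α)_{α∈S} partition the columns. Then in the ring ℚ[ℤ/Nℤ][t] of polynomials over the group algebra ℚ[ℤ/Nℤ] (with σ(k) denoting the basis element of k ∈ ℤ/Nℤ), one has ∑_{j ∈ (ℤ/Nℤ)ⁿ} ∑_{h ∈ {0,…,N−1}^m} t^{𝟙ᵀAh} · σ(jᵀ(y − Ah)) = ∑_{j'} σ(∑_{l ∉ S} j'_l y_l) · ( ∑_{h⁰ : C_0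 → {0,…,N−1}} t^{∑_{k∈C_0} (𝟙ᵀA_k) h⁰_k} σ(−∑_{k∈C_0} (ĵ'ᵀA_k) h⁰_k) ) · ∏_{α ∈ S} ( ∑_{j_α ∈ ℤ/Nℤ} σ(j_α y_α) ∑_{h^α : C_α → {0,…,N−1}} t^{∑_{k∈C_α} (𝟙ᵀA_k) h^α_k} σ(−∑_{k∈C_α} ((ĵ' + j_α e_α)ᵀ A_k) h^α_k) ), where the outer sum on the right runs over all maps j' : {1,…,n} ∖ S → ℤ/Nℤ, ĵ' ∈ (ℤ/Nℤ)ⁿ denotes the extension of j' by zero on S, and e_α is the α-th unit vector. -/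
open Polynomial

/-!
The factorization is two applications of the distributive law. Writing `σ c` for the basis element
at `c`, the summand for fixed `j` is `∏ l, σ (j l * y l)` times a product over columns `k`, so the
sum over `h` becomes a product of one-column sums `colSum N (∑ l, A l k) (∑ l, j l * A l k)`
(`sum_eq_prod_colSum`). On the right-hand side the same law turns the product over `α ∈ S` of sums
over `jα` into a sum over vectors indexed by `S`, which together with `j'` amounts to a vector `j`.
It remains to compare summands: the columns split into the part avoiding `S` and the parts met by
each `α ∈ S` (`prod_column_partition`, where stability of `S` is used), and a column meeting `S`
only in `α` sees, among the entries of `j` indexed by `S`, only `j α`.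
-/

/-- The basis element of the group algebra at `c`, as a constant polynomial. -/
noncomputable def sig (N : ℕ) (c : ZMod N) : Polynomial (AddMonoidAlgebra ℚ (ZMod N)) :=
  Polynomial.C (AddMonoidAlgebra.single c (1 : ℚ))

/-- The contribution `∑_{a < N} t ^ (d a) σ(-c a)` of a single column with entry sum `d` and
pairing `c` with the vector `j`. -/
noncomputable def colSum (N d : ℕ) (c : ZMod N) : Polynomial (AddMonoidAlgebra ℚ (ZMod N)) :=
  ∑ a : Fin N, (X : Polynomial (AddMonoidAlgebra ℚ (ZMod N))) ^ (d * (a : ℕ)) *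
    sig N (-(c * ((a : ℕ) : ZMod N)))

theorem sig_add (N : ℕ) (a b : ZMod N) : sig N (a + b) = sig N a * sig N b := by
  simp [sig, ← Polynomial.C_mul, AddMonoidAlgebra.single_mul_single]

theorem sig_sum (N : ℕ) {ι : Type*} (s : Finset ι) (f : ι → ZMod N) :
    sig N (∑ i ∈ s, f i) = ∏ i ∈ s, sig N (f i) := by
  classical
  induction s using Finset.induction_on with
  | empty => simp [sig, ← AddMonoidAlgebra.one_def]
  | insert a s ha ih => rw [Finset.sum_insert ha, Finset.prod_insert ha, sig_add, ih]

theorem sum_eq_prod_colSum (N : ℕ) {ι : Type*} [Fintype ι] [DecidableEq ι] (d : ι → ℕ) (c : ι → ZMod N) :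
    ∑ h : ι → Fin N, (X : Polynomial (AddMonoidAlgebra ℚ (ZMod N))) ^ (∑ k, d k * (h k : ℕ)) *
      sig N (-∑ k, c k * ((h k : ℕ) : ZMod N)) = ∏ k, colSum N (d k) (c k) := by
  simp only [colSum]
  rw [Finset.prod_univ_sum, Fintype.piFinset_univ]
  refine Finset.sum_congr rfl fun h _ => ?_
  rw [Finset.prod_mul_distrib, Finset.prod_pow_eq_pow_sum, ← sig_sum, Finset.sum_neg_distrib]

/-- If each column meets `S` at most once, then a product over all columns splits into the product
over the columns avoiding `S` and, for each `α ∈ S`, the product over the columns meeting `α`. -/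
theorem prod_column_partition {n m : ℕ} (A : Matrix (Fin n) (Fin m) ℕ) (S : Finset (Fin n))
    (hS : ∀ k : Fin m, (S.filter (fun α => A α k ≠ 0)).card ≤ 1)
    {M : Type*} [CommMonoid M] (f : Fin m → M) :
    ∏ k, f k = (∏ k : {k : Fin m // ∀ α ∈ S, A α k = 0}, f k.1) *
      ∏ α ∈ S, ∏ k : {k : Fin m // A α k ≠ 0}, f k.1 := by
  classical
  have h0 : (∏ k : {k : Fin m // ∀ α ∈ S, A α k = 0}, f k.1)
      = ∏ k, if ∀ α ∈ S, A α k = 0 then f k else 1 := by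
    rw [← Finset.prod_filter]
    exact (Finset.prod_subtype _ (by simp) f).symm
  have h1 (α : Fin n) : (∏ k : {k : Fin m // A α k ≠ 0}, f k.1)
      = ∏ k, if A α k ≠ 0 then f k else 1 := by
    rw [← Finset.prod_filter]
    exact (Finset.prod_subtype _ (by simp) f).symm
  simp only [h0, h1]
  rw [Finset.prod_comm, ← Finset.prod_mul_distrib]
  refine Finset.prod_congr rfl fun k _ => ?_
  -- the inner product over `S` is a power of `f k` with exponent the number of `α ∈ S` met by `k`
  rw [← Finset.prod_filter, Finset.prod_const]
  by_cases hk : ∀ α ∈ S, A α k = 0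
  · have : (S.filter (fun α => A α k ≠ 0)).card = 0 := by
      rw [Finset.card_eq_zero, Finset.filter_eq_empty_iff]
      simpa using hk
    rw [if_pos hk, this, pow_zero, mul_one]
  · have : (S.filter (fun α => A α k ≠ 0)).card = 1 := by
      refine le_antisymm (hS k) (Finset.card_pos.mpr ?_)
      push Not at hk
      obtain ⟨α, h, h'⟩ := hk
      exact ⟨α, by simp [h, h']⟩
    rw [if_neg hk, this, pow_one, one_mul]

/-- Factorization of the generating sum over a stable set `S` of the hypergraph `ℋ(A)`,
in the ring `ℚ[ℤ/Nℤ][t]`. -/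
theorem stmt_15 (n m N : ℕ) [NeZero N]
    (A : Matrix (Fin n) (Fin m) ℕ) (y : Fin n → ℕ)
    (S : Finset (Fin n))
    (hS : ∀ k : Fin m, (S.filter (fun α => A α k ≠ 0)).card ≤ 1)
    (ext : ({l : Fin n // l ∉ S} → ZMod N) → Fin n → ZMod N)
    (hext : ∀ (j' : {l : Fin n // l ∉ S} → ZMod N) (l : Fin n),
      ext j' l = if h : l ∈ S then 0 else j' ⟨l, h⟩) :
    (∑ j : Fin n → ZMod N, ∑ h : Fin m → Fin N,
        (X : Polynomial (AddMonoidAlgebra ℚ (ZMod N))) ^ (∑ l, ∑ k, A l k * (h k : ℕ)) *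
          Polynomial.C (AddMonoidAlgebra.single
            ((((∑ l, j l *
                (((y l : ℤ) - ∑ k, (A l k : ℤ) * ((h k : ℕ) : ℤ) : ℤ) : ZMod N))) : ZMod N))
            (1 : ℚ)))
    = ∑ j' : ({l : Fin n // l ∉ S} → ZMod N),
        Polynomial.C (AddMonoidAlgebra.single
            ((∑ l : {l : Fin n // l ∉ S}, j' l * ((y l.1 : ℕ) : ZMod N)) : ZMod N) (1 : ℚ)) *
        (∑ h0 : ({k : Fin m // ∀ α ∈ S, A α k = 0} → Fin N),
            (X : Polynomial (AddMonoidAlgebra ℚ (ZMod N))) ^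
                (∑ k : {k : Fin m // ∀ α ∈ S, A α k = 0}, (∑ l, A l k.1) * (h0 k : ℕ)) *
              Polynomial.C (AddMonoidAlgebra.single
                ((-∑ k : {k : Fin m // ∀ α ∈ S, A α k = 0},
                    (∑ l, ext j' l * ((A l k.1 : ℕ) : ZMod N)) * ((h0 k : ℕ) : ZMod N)) : ZMod N)
                (1 : ℚ))) *
        ∏ α ∈ S,
          (∑ jα : ZMod N,
            Polynomial.C (AddMonoidAlgebra.single ((jα * ((y α : ℕ) : ZMod N)) : ZMod N) (1 : ℚ)) *
            ∑ hα : ({k : Fin m // A α k ≠ 0} → Fin N),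
              (X : Polynomial (AddMonoidAlgebra ℚ (ZMod N))) ^
                  (∑ k : {k : Fin m // A α k ≠ 0}, (∑ l, A l k.1) * (hα k : ℕ)) *
                Polynomial.C (AddMonoidAlgebra.single
                  ((-∑ k : {k : Fin m // A α k ≠ 0},
                      (∑ l, (ext j' l + if l = α then jα else 0) * ((A l k.1 : ℕ) : ZMod N)) *
                        ((hα k : ℕ) : ZMod N)) : ZMod N)
                  (1 : ℚ))) := by
  classical
  simp only [← sig.eq_1]
  have hL (j : Fin n → ZMod N) : (∑ h : Fin m → Fin N,
        (X : Polynomial (AddMonoidAlgebra ℚ (ZMod N))) ^ (∑ l, ∑ k, A l k * (h k : ℕ)) *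
          sig N (∑ l, j l *
            (((y l : ℤ) - ∑ k, (A l k : ℤ) * ((h k : ℕ) : ℤ) : ℤ) : ZMod N)))
      = (∏ l, sig N (j l * ((y l : ℕ) : ZMod N))) *
          ∏ k, colSum N (∑ l, A l k) (∑ l, j l * ((A l k : ℕ) : ZMod N)) := by
    rw [← sum_eq_prod_colSum, ← sig_sum, Finset.mul_sum]
    refine Finset.sum_congr rfl fun h _ => ?_
    have e1 : ∑ l, ∑ k, A l k * (h k : ℕ) = ∑ k, (∑ l, A l k) * (h k : ℕ) := by
      rw [Finset.sum_comm]
      simp only [Finset.sum_mul]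
    have e2 : (∑ l, j l * (((y l : ℤ) - ∑ k, (A l k : ℤ) * ((h k : ℕ) : ℤ) : ℤ) : ZMod N))
        = (∑ l, j l * ((y l : ℕ) : ZMod N)) +
          -∑ k, (∑ l, j l * ((A l k : ℕ) : ZMod N)) * ((h k : ℕ) : ZMod N) := by
      push_cast
      simp only [mul_sub, Finset.sum_sub_distrib, Finset.mul_sum, Finset.sum_mul]
      rw [Finset.sum_comm (γ := Fin n), sub_eq_add_neg]
      simp only [mul_assoc]
    rw [e1, e2, sig_add]
    ring
  simp only [hL, sum_eq_prod_colSum]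
  -- a vector `j` is the pair of its restrictions to `S` and to the complement of `S`
  rw [← (Equiv.piEquivPiSubtypeProd (· ∈ S) (fun _ => ZMod N)).symm.sum_comp,
    Fintype.sum_prod_type_right]
  refine Finset.sum_congr rfl fun j' _ => ?_
  rw [← Finset.prod_coe_sort S, Finset.prod_univ_sum, Fintype.piFinset_univ, Finset.mul_sum]
  refine Finset.sum_congr rfl fun js _ => ?_
  set j := (Equiv.piEquivPiSubtypeProd (· ∈ S) (fun _ => ZMod N)).symm (js, j') with hj
  have hjS (α : {l // l ∈ S}) : j α.1 = js α := by
    simp [hj, Equiv.piEquivPiSubtypeProd]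
  have hjN (l : {l // l ∉ S}) : j l.1 = j' l := by
    simp [hj, Equiv.piEquivPiSubtypeProd, l.2]
  have hextS (l : Fin n) (h : l ∈ S) : ext j' l = 0 := by simp [hext, h]
  have hextN (l : Fin n) (h : l ∉ S) : ext j' l = j l := by
    rw [hext, dif_neg h, ← hjN ⟨l, h⟩]
  have hy : ∏ l, sig N (j l * ((y l : ℕ) : ZMod N))
      = sig N (∑ l : {l : Fin n // l ∉ S}, j' l * ((y l.1 : ℕ) : ZMod N)) *
        ∏ α : {l // l ∈ S}, sig N (js α * ((y α.1 : ℕ) : ZMod N)) := by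
    rw [← Fintype.prod_subtype_mul_prod_subtype (· ∈ S), mul_comm, sig_sum]
    simp only [hjS, hjN]
    congr!
  have hc0 (k : {k : Fin m // ∀ α ∈ S, A α k = 0}) :
      ∑ l, j l * ((A l k.1 : ℕ) : ZMod N) = ∑ l, ext j' l * ((A l k.1 : ℕ) : ZMod N) := by
    refine Finset.sum_congr rfl fun l _ => ?_
    by_cases h : l ∈ S
    · simp [k.2 l h]
    · rw [hextN l h]
  have hc (α : {l // l ∈ S}) (k : {k : Fin m // A α.1 k ≠ 0}) :
      ∑ l, j l * ((A l k.1 : ℕ) : ZMod N)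
        = ∑ l, (ext j' l + if l = α.1 then js α else 0) * ((A l k.1 : ℕ) : ZMod N) := by
    refine Finset.sum_congr rfl fun l _ => ?_
    by_cases h : l ∈ S
    · rw [hextS l h, zero_add]
      by_cases hl : l = α.1
      · rw [if_pos hl, hl, hjS]
      · have : A l k.1 = 0 := by
          -- stability: column `k` already meets `S` in `α`
          by_contra h0
          exact hl (Finset.card_le_one.mp (hS k.1) l (by simp [h, h0]) α.1
            (by simp [α.2, k.2]))
        simp [this]
    · have hl : l ≠ α.1 := fun e => h (e ▸ α.2)
      rw [hextN l h, if_neg hl, add_zero]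
  rw [hy, prod_column_partition A S hS, ← Finset.prod_coe_sort S, Finset.prod_mul_distrib]
  simp only [hc0, hc]
  ring
end
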